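/- arXiv:2112.14383 — 2 statements merged into one kernel-verified Lean document; each statement's English description precedes it below -/
import Mathlib

section
/- Let W = {A ∈ ℝ : A > 1 and ⌊A^{3^{k!}}⌋ is a prime number for every k ≥ 1}. Then the left sub-boundary ∂_L W is algebraically independent over ℚ, i.e., every nonempty finite subset {A_1,…,A_r} ⊆ ∂_L W satisfies P(A_1,…,A_r) ≠ 0 for every nonzero polynomial P ∈ ℚ[x_1,…,x_r]. -/
/-- The set `W` of `A > 1` such that `⌊A ^ (3 ^ (k !))⌋` is prime for every `k ≥ 1`. -/
def Wpow : Set ℝ :=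
  {A : ℝ | 1 < A ∧ ∀ k : ℕ, 1 ≤ k → Prime ⌊A ^ (3 ^ Nat.factorial k)⌋}

/-- `U` is a connected component of `S` (as a subset of `ℝ`). -/
def IsCCompOf (U S : Set ℝ) : Prop := ∃ x ∈ S, U = connectedComponentIn S x

/-- The left sub-boundary of `X ⊆ ℝ`: suprema of the components of `ℝ \ X`
that are bounded above. -/
def subL (X : Set ℝ) : Set ℝ :=
  {A : ℝ | ∃ U : Set ℝ, IsCCompOf U Xᶜ ∧ BddAbove U ∧ A = sSup U}

/-!
A point `A` of `subL Wpow` lies in `Wpow` and has a gap of `Wpow` immediately to its left. The idea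
is to build, for each large `k`, a competitor `B` in `Wpow` with `⌊B ^ 3 ^ k!⌋` equal to the same
prime `p = ⌊A ^ 3 ^ k!⌋` and extremely close to `p ^ (1 / 3 ^ k!)`; as `B` cannot lie in the gap,
`A` is itself that close to `p ^ (1 / 3 ^ k!)`.

The competitor comes from a chain of primes, each just above a high power of the previous one. This
needs primes `q` with `|log q - y| < exp (-y ^ (1 / 20) / 16)` for all large `y`. They come from the
zero-free region `1 - σ < a / L ^ 9` for `|t| ≤ exp L`: shifting the contour in Perron's formula for
`∑ (Λ n - 1) (y - log n)⁺` bounds this sum by `exp (y - y ^ (1 / 20) / 2)`, and a second difference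
in `y` isolates the primes near `exp y`.

Given a polynomial relation `P (A₁, …, A_r) = 0`, the roots `αᵢ = pᵢ ^ (1 / n)`, `n = 3 ^ k!`, make
`P α` smaller than `exp (-n ^ R)` up to a constant factor, for every `R`. But the `pᵢ` are distinct
primes, and monomials in the `αᵢ` with exponents below `n` are linearly independent over `ℚ` because
a nontrivial ratio of two of them has trace `0`. So `P α ≠ 0` once `n` exceeds the degree of `P`,
and since `P α` is an algebraic integer of degree at most `n ^ r`, its norm gives
`|P α| ≥ C ^ (-n ^ r)`, a contradiction for `R = r + 1`.
-/

namespace PrimeRepresenting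

section ZetaBound
open Complex Filter Topology

/-- `s - 1` times the error of the left Riemann sum for `∫ x in n..n + 1, x ^ (-s)`; the factor
`s - 1` makes it entire in `s`. -/
noncomputable def zetaRemainder (n : ℕ) (s : ℂ) : ℂ :=
  (s - 1) * (n : ℂ) ^ (-s) - ((n : ℂ) ^ (1 - s) - ((n + 1 : ℕ) : ℂ) ^ (1 - s))

lemma norm_cpow_neg_sub_cpow_neg_le {a x : ℝ} (ha : 0 < a) (hx : a ≤ x) {s : ℂ} (hs : 0 < s.re) :
    ‖(x : ℂ) ^ (-s) - (a : ℂ) ^ (-s)‖ ≤ ‖s‖ * a ^ (-s.re - 1) * (x - a) := by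
  have hs0 : s ≠ 0 := by rintro rfl; simp at hs
  refine norm_image_sub_le_of_norm_deriv_le_segment' (f := fun y : ℝ ↦ (y : ℂ) ^ (-s))
    (f' := fun y : ℝ ↦ -s * (y : ℂ) ^ (-s - 1)) (fun y hy ↦ ?_) (fun y hy ↦ ?_) x ⟨hx, le_rfl⟩
  · exact (hasDerivAt_ofReal_cpow_const (ha.trans_le hy.1).ne'
      (neg_ne_zero.mpr hs0)).hasDerivWithinAt
  · rw [norm_mul, norm_neg, norm_cpow_eq_rpow_re_of_pos (ha.trans_le hy.1)]
    gcongr ‖s‖ * ?_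
    have hexp : (-s - 1).re = -s.re - 1 := by simp
    rw [hexp]
    exact Real.rpow_le_rpow_of_nonpos ha hy.1 (by linarith)

lemma norm_zetaRemainder_le {n : ℕ} (hn : 1 ≤ n) {s : ℂ} (hs : 0 < s.re) :
    ‖zetaRemainder n s‖ ≤ ‖s - 1‖ * ‖s‖ * (n : ℝ) ^ (-s.re - 1) := by
  rcases eq_or_ne s 1 with rfl | h1
  · simp [zetaRemainder]
  have hn0 : (0 : ℝ) < n := by exact_mod_cast hn
  let F (y : ℝ) : ℂ := (y : ℂ) ^ (1 - s) + (s - 1) * (n : ℂ) ^ (-s) * y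
  have hF (y : ℝ) (hy : (n : ℝ) ≤ y) :
      HasDerivAt F ((s - 1) * ((n : ℂ) ^ (-s) - (y : ℂ) ^ (-s))) y := by
    have hpow := hasDerivAt_ofReal_cpow_const (hn0.trans_le hy).ne' (sub_ne_zero.mpr h1.symm)
    have hlin := (ofRealCLM.hasDerivAt (x := y)).const_mul ((s - 1) * (n : ℂ) ^ (-s))
    refine (hpow.add hlin).congr_deriv ?_
    rw [show 1 - s - 1 = -s by ring, ofRealCLM_apply, ofReal_one]
    ring
  have hbound := norm_image_sub_le_of_norm_deriv_le_segment' (a := n) (b := n + 1) (f := F)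
    (C := ‖s - 1‖ * ‖s‖ * (n : ℝ) ^ (-s.re - 1))
    (fun y hy ↦ (hF y hy.1).hasDerivWithinAt) (fun y hy ↦ ?_) (n + 1) ⟨by linarith, le_rfl⟩
  · have hrem : zetaRemainder n s = F (n + 1) - F n := by
      simp only [zetaRemainder, F]
      push_cast
      ring
    simpa [hrem] using hbound
  · rw [norm_mul, mul_assoc, norm_sub_rev ((n : ℂ) ^ (-s))]
    gcongr
    calc ‖(y : ℂ) ^ (-s) - (n : ℂ) ^ (-s)‖ ≤ ‖s‖ * (n : ℝ) ^ (-s.re - 1) * (y - n) :=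
          mod_cast norm_cpow_neg_sub_cpow_neg_le hn0 hy.1 hs
      _ ≤ ‖s‖ * (n : ℝ) ^ (-s.re - 1) :=
          mul_le_of_le_one_right (by positivity) (by linarith [hy.2])

lemma differentiable_natCast_cpow {n : ℕ} (hn : n ≠ 0) {f : ℂ → ℂ} (hf : Differentiable ℂ f) :
    Differentiable ℂ fun s ↦ (n : ℂ) ^ f s :=
  fun s ↦ (hf s).const_cpow (Or.inl (Nat.cast_ne_zero.mpr hn))

lemma differentiable_zetaRemainder {n : ℕ} (hn : 1 ≤ n) : Differentiable ℂ (zetaRemainder n) := by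
  have hpow {m : ℕ} (hm : m ≠ 0) : Differentiable ℂ fun s : ℂ ↦ (m : ℂ) ^ (1 - s) :=
    differentiable_natCast_cpow hm (by fun_prop)
  exact (Differentiable.mul (by fun_prop)
    (differentiable_natCast_cpow (by lia) (by fun_prop))).sub
      ((hpow (by lia)).sub (hpow n.succ_ne_zero))

lemma summable_nat_add_rpow (N : ℕ) {a : ℝ} (ha : a < -1) :
    Summable fun n : ℕ ↦ ((n + N : ℕ) : ℝ) ^ a :=
  (summable_nat_add_iff N).mpr (Real.summable_nat_rpow.mpr ha)

lemma tsum_nat_add_rpow_le {N : ℕ} (hN : 1 ≤ N) {σ : ℝ} (hσ : 0 < σ) :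
    ∑' n : ℕ, ((n + N : ℕ) : ℝ) ^ (-σ - 1) ≤ (1 + 1 / σ) * (N : ℝ) ^ (-σ) := by
  have hN1 : (1 : ℝ) ≤ N := by exact_mod_cast hN
  have hN0 : (0 : ℝ) < N := by linarith
  have hanti : AntitoneOn (fun x : ℝ ↦ x ^ (-σ - 1)) (Set.Ici (N : ℝ)) := fun x hx y _ hxy ↦
    Real.rpow_le_rpow_of_nonpos (hN0.trans_le hx) hxy (by linarith)
  have htail := hanti.tsum_comp_add_le_integral N (integrableOn_Ioi_rpow_of_lt (by linarith) hN0)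
    fun x hx ↦ Real.rpow_nonneg (hN0.trans hx).le _
  rw [integral_Ioi_rpow_of_lt (by linarith) hN0] at htail
  rw [(summable_nat_add_rpow N (by linarith)).tsum_eq_zero_add]
  have hfirst : ((0 + N : ℕ) : ℝ) ^ (-σ - 1) ≤ (N : ℝ) ^ (-σ) := by
    rw [zero_add]
    exact Real.rpow_le_rpow_of_exponent_le hN1 (by linarith)
  calc ((0 + N : ℕ) : ℝ) ^ (-σ - 1) + ∑' n : ℕ, ((n + 1 + N : ℕ) : ℝ) ^ (-σ - 1)
      ≤ (N : ℝ) ^ (-σ) + -(N : ℝ) ^ (-σ - 1 + 1) / (-σ - 1 + 1) := by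
        simp only [add_right_comm _ 1 N]
        gcongr
    _ = (1 + 1 / σ) * (N : ℝ) ^ (-σ) := by
        rw [sub_add_cancel]
        field_simp

lemma hasSum_natCast_cpow_sub {N : ℕ} (hN : 1 ≤ N) {s : ℂ} (hs : 1 < s.re)
    (hsum : Summable fun n : ℕ ↦
      ((n + N : ℕ) : ℂ) ^ (1 - s) - ((n + N + 1 : ℕ) : ℂ) ^ (1 - s)) :
    HasSum (fun n : ℕ ↦ ((n + N : ℕ) : ℂ) ^ (1 - s) - ((n + N + 1 : ℕ) : ℂ) ^ (1 - s))
      ((N : ℂ) ^ (1 - s)) := by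
  have hlim : Tendsto (fun m : ℕ ↦ ((m + N : ℕ) : ℂ) ^ (1 - s)) atTop (𝓝 0) := by
    rw [tendsto_zero_iff_norm_tendsto_zero]
    have hreal := (tendsto_rpow_neg_atTop (sub_pos.mpr hs)).comp
      (tendsto_natCast_atTop_atTop.comp (tendsto_add_atTop_nat N))
    refine hreal.congr fun m ↦ ?_
    rw [norm_natCast_cpow_of_pos (by lia)]
    simp
  refine hsum.hasSum_iff_tendsto_nat.mpr ?_
  have htel (m : ℕ) := Finset.sum_range_sub' (fun n : ℕ ↦ ((n + N : ℕ) : ℂ) ^ (1 - s)) m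
  simp only [add_right_comm _ 1 N, zero_add] at htel
  simpa only [htel, sub_zero] using hlim.const_sub ((N : ℂ) ^ (1 - s))

lemma summable_zetaRemainder {N : ℕ} (hN : 1 ≤ N) {s : ℂ} (hs : 0 < s.re) :
    Summable fun n : ℕ ↦ zetaRemainder (n + N) s :=
  .of_norm_bounded ((summable_nat_add_rpow N (by linarith)).mul_left _)
    fun n ↦ norm_zetaRemainder_le (by lia) hs

lemma norm_tsum_zetaRemainder_le {N : ℕ} (hN : 1 ≤ N) {s : ℂ} (hs : 0 < s.re) :
    ‖∑' n : ℕ, zetaRemainder (n + N) s‖ ≤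
      ‖s - 1‖ * ‖s‖ * ((1 + 1 / s.re) * (N : ℝ) ^ (-s.re)) := by
  refine (tsum_of_norm_bounded ((summable_nat_add_rpow N (a := -s.re - 1) (by linarith)).mul_left
    (‖s - 1‖ * ‖s‖)).hasSum fun n ↦ norm_zetaRemainder_le (by lia) hs).trans ?_
  rw [tsum_mul_left]
  gcongr
  exact tsum_nat_add_rpow_le hN hs

lemma riemannZeta₁_eq_of_one_lt_re {N : ℕ} (hN : 1 ≤ N) {s : ℂ} (hs : 1 < s.re) :
    riemannZeta₁ s = (s - 1) * ∑ n ∈ Finset.Ico 1 N, (n : ℂ) ^ (-s) + (N : ℂ) ^ (1 - s) +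
      ∑' n : ℕ, zetaRemainder (n + N) s := by
  have hs1 : s ≠ 1 := by rintro rfl; simp at hs
  have hs0 : -s ≠ 0 := by rintro h; simp [neg_eq_zero.mp h] at hs; linarith
  have hsum : Summable fun n : ℕ ↦ (n : ℂ) ^ (-s) := by
    simpa only [cpow_neg, one_div] using summable_one_div_nat_cpow.mpr hs
  have hsumN := ((summable_nat_add_iff N).mpr hsum).mul_left (s - 1)
  have hrem := summable_zetaRemainder hN (zero_lt_one.trans hs)
  have htel := hasSum_natCast_cpow_sub hN hs <| (hsumN.sub hrem).congr fun n ↦ by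
    simp only [zetaRemainder, sub_sub_cancel]
  have htail : ∑' n : ℕ, zetaRemainder (n + N) s =
      (s - 1) * ∑' n : ℕ, ((n + N : ℕ) : ℂ) ^ (-s) - (N : ℂ) ^ (1 - s) := by
    rw [← tsum_mul_left, ← htel.tsum_eq, ← hsumN.tsum_sub htel.summable]
    rfl
  have hhead : ∑ n ∈ Finset.range N, (n : ℂ) ^ (-s) = ∑ n ∈ Finset.Ico 1 N, (n : ℂ) ^ (-s) := by
    rw [Finset.range_eq_Ico, Finset.sum_eq_sum_Ico_succ_bot hN]
    simp [zero_cpow hs0]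
  have hzeta : riemannZeta s = ∑' n : ℕ, (n : ℂ) ^ (-s) := by
    simp only [zeta_eq_tsum_one_div_nat_cpow hs, cpow_neg, one_div]
  have hzeta₁ : riemannZeta₁ s = (s - 1) * riemannZeta s := by
    rw [riemannZeta_eq_inv_sub_mul hs1, mul_inv_cancel_left₀ (sub_ne_zero.mpr hs1)]
  rw [hzeta₁, hzeta, ← hsum.sum_add_tsum_nat_add N, hhead, htail]
  ring

lemma differentiableOn_tsum_zetaRemainder {N : ℕ} (hN : 1 ≤ N) :
    DifferentiableOn ℂ (fun s ↦ ∑' n : ℕ, zetaRemainder (n + N) s) {s | 0 < s.re} := by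
  intro s hs
  have hs : 0 < s.re := hs
  set U : Set ℂ := {z | s.re / 2 < z.re} ∩ Metric.ball 0 (‖s‖ + 1)
  have hU : IsOpen U := (isOpen_lt continuous_const continuous_re).inter Metric.isOpen_ball
  have hsU : s ∈ U := ⟨half_lt_self hs, by simp⟩
  suffices h : DifferentiableOn ℂ (fun s ↦ ∑' n : ℕ, zetaRemainder (n + N) s) U from
    (h.differentiableAt (hU.mem_nhds hsU)).differentiableWithinAt
  refine differentiableOn_tsum_of_summable_norm
    (u := fun n : ℕ ↦ (‖s‖ + 2) * (‖s‖ + 1) * ((n + N : ℕ) : ℝ) ^ (-(s.re / 2) - 1))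
    ((summable_nat_add_rpow N (by linarith)).mul_left _)
    (fun n ↦ (differentiable_zetaRemainder (by lia)).differentiableOn) hU fun n z hz ↦ ?_
  have hre : s.re / 2 < z.re := hz.1
  have hnorm : ‖z‖ ≤ ‖s‖ + 1 := (mem_ball_zero_iff.mp hz.2).le
  have hnorm' : ‖z - 1‖ ≤ ‖s‖ + 2 := (norm_sub_le _ _).trans (by rw [norm_one]; linarith)
  have hn : (1 : ℝ) ≤ ((n + N : ℕ) : ℝ) := by exact_mod_cast (by lia : 1 ≤ n + N)
  refine (norm_zetaRemainder_le (by lia) (by linarith)).trans ?_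
  gcongr

lemma riemannZeta₁_eq {N : ℕ} (hN : 1 ≤ N) {s : ℂ} (hs : 0 < s.re) :
    riemannZeta₁ s = (s - 1) * ∑ n ∈ Finset.Ico 1 N, (n : ℂ) ^ (-s) + (N : ℂ) ^ (1 - s) +
      ∑' n : ℕ, zetaRemainder (n + N) s := by
  have hopen : IsOpen {s : ℂ | 0 < s.re} := isOpen_lt continuous_const continuous_re
  have hright : DifferentiableOn ℂ (fun s ↦ (s - 1) * ∑ n ∈ Finset.Ico 1 N, (n : ℂ) ^ (-s) +
      (N : ℂ) ^ (1 - s) + ∑' n : ℕ, zetaRemainder (n + N) s) {s | 0 < s.re} := by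
    refine .add (Differentiable.differentiableOn (.add (.mul (by fun_prop) ?_) ?_))
      (differentiableOn_tsum_zetaRemainder hN)
    · exact .fun_sum fun n hn ↦ differentiable_natCast_cpow
        (Nat.one_le_iff_ne_zero.mp (Finset.mem_Ico.mp hn).1) (by fun_prop)
    · exact differentiable_natCast_cpow (by lia) (by fun_prop)
  refine AnalyticOnNhd.eqOn_of_preconnected_of_eventuallyEq (z₀ := 2)
    (differentiable_riemannZeta₁.differentiableOn.analyticOnNhd hopen)
    (hright.analyticOnNhd hopen) (convex_halfSpace_re_gt 0).isPreconnected (by simp) ?_ hs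
  have hnhds : {z : ℂ | 1 < z.re} ∈ 𝓝 (2 : ℂ) :=
    (isOpen_lt continuous_const continuous_re).mem_nhds (by simp)
  filter_upwards [hnhds] with z hz using riemannZeta₁_eq_of_one_lt_re hN hz

lemma norm_riemannZeta_le {N : ℕ} (hN : 1 ≤ N) {s : ℂ} (hs : 0 < s.re) (hs1 : s ≠ 1) :
    ‖riemannZeta s‖ ≤ ∑ n ∈ Finset.Ico 1 N, (n : ℝ) ^ (-s.re) + (N : ℝ) ^ (1 - s.re) / ‖s - 1‖ +
      ‖s‖ * ((1 + 1 / s.re) * (N : ℝ) ^ (-s.re)) := by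
  have hs1' : s - 1 ≠ 0 := sub_ne_zero.mpr hs1
  have hzeta : riemannZeta s = ∑ n ∈ Finset.Ico 1 N, (n : ℂ) ^ (-s) + (N : ℂ) ^ (1 - s) / (s - 1) +
      (∑' n : ℕ, zetaRemainder (n + N) s) / (s - 1) := by
    rw [riemannZeta_eq_inv_sub_mul hs1, riemannZeta₁_eq hN hs]
    field_simp
  rw [hzeta]
  refine norm_add₃_le.trans (add_le_add_three ?_ ?_ ?_)
  · refine norm_sum_le_of_le _ fun n hn ↦ ?_
    rw [norm_natCast_cpow_of_pos (Finset.mem_Ico.mp hn).1, neg_re]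
  · rw [norm_div, norm_natCast_cpow_of_pos hN, sub_re, one_re]
  · rw [norm_div, div_le_iff₀ (norm_pos_iff.mpr hs1')]
    exact (norm_tsum_zetaRemainder_le hN hs).trans (le_of_eq (by ring))

lemma rpow_one_sub_le_exp {L x σ k : ℝ} (hL : 0 < L) (hx : 1 ≤ x) (hxL : x ≤ Real.exp (k * L))
    (hσ : 1 - 1 / L ≤ σ) : x ^ (1 - σ) ≤ Real.exp k :=
  calc x ^ (1 - σ) ≤ x ^ (1 / L) := Real.rpow_le_rpow_of_exponent_le hx (by linarith)
    _ ≤ Real.exp (k * L) ^ (1 / L) := by gcongr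
    _ = Real.exp k := by
      rw [← Real.exp_mul]
      field_simp

lemma sum_Ico_rpow_neg_le {L σ : ℝ} (hL : 0 < L) (hσ : 1 - 1 / L ≤ σ) :
    ∑ n ∈ Finset.Ico 1 ⌈Real.exp L⌉₊, (n : ℝ) ^ (-σ) ≤ 3 * (1 + L) := by
  obtain ⟨M, hM⟩ : ∃ M, ⌈Real.exp L⌉₊ = M + 1 :=
    Nat.exists_eq_add_one.mpr (Nat.ceil_pos.mpr (Real.exp_pos L))
  have hMexp : (M : ℝ) ≤ Real.exp L := (Nat.lt_ceil.mp (by lia)).le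
  have hterm (n : ℕ) (hn : n ∈ Finset.Ico 1 (M + 1)) : (n : ℝ) ^ (-σ) ≤ 3 * (n : ℝ)⁻¹ := by
    obtain ⟨h1n, hnM⟩ := Finset.mem_Ico.mp hn
    have h1n : (1 : ℝ) ≤ n := by exact_mod_cast h1n
    have hnL : (n : ℝ) ≤ Real.exp L :=
      le_trans (by exact_mod_cast Nat.lt_succ_iff.mp hnM) hMexp
    calc (n : ℝ) ^ (-σ) = (n : ℝ) ^ (1 - σ) * (n : ℝ)⁻¹ := by
          rw [← Real.rpow_neg_one, ← Real.rpow_add (by linarith)]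
          ring_nf
      _ ≤ 3 * (n : ℝ)⁻¹ := by
          gcongr
          exact (rpow_one_sub_le_exp (k := 1) hL h1n (by rwa [one_mul]) hσ).trans
            (by linarith [Real.exp_one_lt_d9])
  have hlog : Real.log M ≤ L := by
    rcases M.eq_zero_or_pos with rfl | hM0
    · simp [hL.le]
    · exact (Real.log_le_iff_le_exp (by exact_mod_cast hM0)).mpr hMexp
  have hharmonic : ∑ n ∈ Finset.Ico 1 (M + 1), (n : ℝ)⁻¹ ≤ 1 + Real.log M := by
    simpa [harmonic_eq_sum_Icc, Finset.Ico_add_one_right_eq_Icc] using harmonic_le_one_add_log M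
  rw [hM]
  calc ∑ n ∈ Finset.Ico 1 (M + 1), (n : ℝ) ^ (-σ)
      ≤ ∑ n ∈ Finset.Ico 1 (M + 1), 3 * (n : ℝ)⁻¹ := Finset.sum_le_sum hterm
    _ ≤ 3 * (1 + L) := by
        rw [← Finset.mul_sum]
        linarith

lemma norm_riemannZeta_le_of_abs_im_le_exp {L : ℝ} (hL : 3 ≤ L) {s : ℂ} (hre : 1 - 1 / L ≤ s.re)
    (hre' : s.re ≤ 3) (him : 1 / 2 ≤ |s.im|) (him' : |s.im| ≤ Real.exp L) :
    ‖riemannZeta s‖ ≤ 30 * L := by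
  have hexp : L + 1 ≤ Real.exp L := Real.add_one_le_exp L
  have hs1 : s ≠ 1 := by rintro rfl; norm_num at him
  have hs1' : 1 / 2 ≤ ‖s - 1‖ := him.trans (by simpa using abs_im_le_norm (s - 1))
  have hσ : 2 / 3 ≤ s.re := by
    have : 1 / L ≤ 1 / 3 := one_div_le_one_div_of_le (by norm_num) hL
    linarith
  set N := ⌈Real.exp L⌉₊
  have hN : Real.exp L ≤ N := Nat.le_ceil _
  have hN' : (N : ℝ) ≤ Real.exp (2 * L) := by
    have : (N : ℝ) < Real.exp L + 1 := Nat.ceil_lt_add_one (Real.exp_pos L).le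
    rw [two_mul, Real.exp_add]
    nlinarith
  have hN1 : (1 : ℝ) ≤ N := by linarith
  have hpow : (N : ℝ) ^ (1 - s.re) ≤ 9 := by
    refine (rpow_one_sub_le_exp (k := 2) (by linarith) hN1 hN' hre).trans ?_
    rw [← one_add_one_eq_two, Real.exp_add]
    nlinarith [Real.exp_one_lt_d9, Real.exp_pos 1]
  have hpole : (N : ℝ) ^ (1 - s.re) / ‖s - 1‖ ≤ 18 := by
    rw [div_le_iff₀ (by linarith)]
    linarith
  have htail : ‖s‖ * ((1 + 1 / s.re) * (N : ℝ) ^ (-s.re)) ≤ 45 := by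
    have hnorm : ‖s‖ ≤ 2 * N := by
      have := norm_le_abs_re_add_abs_im s
      rw [abs_of_pos (by linarith : 0 < s.re)] at this
      linarith
    have hinv : 1 / s.re ≤ 3 / 2 := by
      rw [div_le_div_iff₀ (by linarith) (by norm_num)]
      linarith
    calc ‖s‖ * ((1 + 1 / s.re) * (N : ℝ) ^ (-s.re))
        ≤ 2 * N * ((1 + 3 / 2) * (N : ℝ) ^ (-s.re)) := by gcongr
      _ = 5 * (N : ℝ) ^ (1 - s.re) := by
          rw [sub_eq_add_neg, Real.rpow_add (by linarith), Real.rpow_one]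
          ring
      _ ≤ 45 := by linarith
  have hsum := sum_Ico_rpow_neg_le (by linarith : 0 < L) hre
  have := norm_riemannZeta_le (by exact_mod_cast hN1 : 1 ≤ N) (by linarith : 0 < s.re) hs1
  linarith

end ZetaBound

section ZeroFreeRegion
open Complex Filter Topology

lemma two_mul_exp_le_exp_two_mul {L : ℝ} (hL : 3 ≤ L) : 2 * Real.exp L ≤ Real.exp (2 * L) := by
  rw [two_mul L, Real.exp_add]
  gcongr
  linarith [Real.add_one_le_exp L]

lemma norm_deriv_riemannZeta_le {L : ℝ} (hL : 3 ≤ L) {s : ℂ} (hre : 1 - 1 / (4 * L) ≤ s.re)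
    (hre' : s.re ≤ 2) (him : 1 ≤ |s.im|) (him' : |s.im| ≤ Real.exp L) :
    ‖deriv riemannZeta s‖ ≤ 240 * L ^ 2 := by
  have hrad : 1 / (4 * L) ≤ 1 / 12 := one_div_le_one_div_of_le (by norm_num) (by linarith)
  have hrad' : 1 / (2 * L) = 1 / (4 * L) + 1 / (4 * L) := by field
  have hexp := two_mul_exp_le_exp_two_mul hL
  have hnear {z : ℂ} (hz : z ∈ Metric.closedBall s (1 / (4 * L))) :
      (1 - 1 / (2 * L) ≤ z.re ∧ z.re ≤ 3) ∧ 1 / 2 ≤ |z.im| ∧ |z.im| ≤ Real.exp (2 * L) := by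
    rw [mem_closedBall_iff_norm] at hz
    have hzre := abs_le.mp ((abs_re_le_norm (z - s)).trans hz)
    have hzim := (abs_im_le_norm (z - s)).trans hz
    rw [sub_re] at hzre
    rw [sub_im] at hzim
    have hle := abs_sub_abs_le_abs_sub z.im s.im
    have hge := abs_sub_abs_le_abs_sub s.im z.im
    rw [abs_sub_comm] at hge
    exact ⟨⟨by linarith, by linarith⟩, by linarith, by linarith⟩
  have hdiff : DifferentiableOn ℂ riemannZeta (closure (Metric.ball s (1 / (4 * L)))) := by
    intro z hz
    refine (differentiableAt_riemannZeta ?_).differentiableWithinAt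
    rintro rfl
    have := (hnear (Metric.closure_ball_subset_closedBall hz)).2.1
    norm_num at this
  calc ‖deriv riemannZeta s‖ ≤ 30 * (2 * L) / (1 / (4 * L)) := by
        refine norm_deriv_le_of_forall_mem_sphere_norm_le (by positivity) hdiff.diffContOnCl
          fun z hz ↦ ?_
        obtain ⟨⟨hz₁, hz₂⟩, hz₃, hz₄⟩ := hnear (Metric.sphere_subset_closedBall hz)
        exact norm_riemannZeta_le_of_abs_im_le_exp (by linarith) hz₁ hz₂ hz₃ hz₄
    _ = 240 * L ^ 2 := by field

lemma exists_norm_riemannZeta_one_add_le :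
    ∃ C : ℝ, 1 ≤ C ∧ ∀ x : ℝ, 0 < x → x ≤ 1 → ‖riemannZeta (1 + x)‖ ≤ C / x := by
  obtain ⟨C, hC⟩ := (isCompact_Icc (a := (0 : ℝ)) (b := 1)).exists_bound_of_continuousOn
    (f := fun x : ℝ ↦ riemannZeta₁ (1 + x))
    (differentiable_riemannZeta₁.continuous.comp (by fun_prop)).continuousOn
  refine ⟨max C 1, le_max_right _ _, fun x hx hx' ↦ ?_⟩
  have hne : (1 + x : ℂ) ≠ 1 := by simpa using hx.ne'
  rw [riemannZeta_eq_inv_sub_mul hne, add_sub_cancel_left, norm_mul, norm_inv, norm_real,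
    Real.norm_of_nonneg hx.le, mul_comm, ← div_eq_mul_inv]
  gcongr
  exact (hC x ⟨hx.le, hx'⟩).trans (le_max_left _ _)

lemma one_le_norm_riemannZeta_product {x : ℝ} (hx : 0 < x) (y : ℝ) :
    1 ≤ ‖riemannZeta (1 + x)‖ ^ 3 * ‖riemannZeta (1 + x + I * y)‖ ^ 4 *
      ‖riemannZeta (1 + x + 2 * I * y)‖ := by
  have h := DirichletCharacter.norm_LFunction_product_ge_one (N := 1) 1 hx y
  simpa only [DirichletCharacter.LFunctionTrivChar, DirichletCharacter.LFunction_modOne_eq,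
    norm_mul, norm_pow] using h

lemma exists_pow_three_le_norm_riemannZeta_pow_four :
    ∃ D : ℝ, 1 ≤ D ∧ ∀ L : ℝ, 3 ≤ L → ∀ s : ℂ, 1 < s.re → s.re ≤ 2 → 1 ≤ |s.im| →
      |s.im| ≤ Real.exp L → (s.re - 1) ^ 3 ≤ D * L * ‖riemannZeta s‖ ^ 4 := by
  obtain ⟨C, hC1, hC⟩ := exists_norm_riemannZeta_one_add_le
  refine ⟨60 * C ^ 3, by linarith [one_le_pow₀ (n := 3) hC1], fun L hL s hre hre' him him' ↦ ?_⟩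
  set x := s.re - 1 with hx
  have hx0 : 0 < x := by linarith
  have hs : s = 1 + x + I * s.im := by
    rw [hx]
    apply Complex.ext <;> simp
  have hdouble : ‖riemannZeta (1 + x + 2 * I * s.im)‖ ≤ 60 * L := by
    have hre_eq : (1 + x + 2 * I * s.im : ℂ).re = s.re := by simp [hx]
    have him_eq : |(1 + x + 2 * I * s.im : ℂ).im| = 2 * |s.im| := by simp [abs_mul]
    have := norm_riemannZeta_le_of_abs_im_le_exp (L := 2 * L) (by linarith)
      (s := 1 + x + 2 * I * s.im)
      (by rw [hre_eq]; linarith [one_div_pos.mpr (by linarith : 0 < 2 * L)])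
      (by linarith) (by linarith) (by linarith [two_mul_exp_le_exp_two_mul hL])
    linarith
  have hprod : 1 ≤ (C / x) ^ 3 * ‖riemannZeta s‖ ^ 4 * (60 * L) := by
    refine (one_le_norm_riemannZeta_product hx0 s.im).trans ?_
    rw [← hs]
    gcongr
    exact hC x hx0 (by linarith)
  calc x ^ 3 ≤ x ^ 3 * ((C / x) ^ 3 * ‖riemannZeta s‖ ^ 4 * (60 * L)) :=
        le_mul_of_one_le_right (by positivity) hprod
    _ = 60 * C ^ 3 * L * ‖riemannZeta s‖ ^ 4 := by field

lemma norm_riemannZeta_sub_le {L : ℝ} (hL : 3 ≤ L) {s : ℂ} (hre : 1 - 1 / (4 * L) ≤ s.re)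
    (him : 1 ≤ |s.im|) (him' : |s.im| ≤ Real.exp L) {σ : ℝ} (hσ : s.re ≤ σ) (hσ' : σ ≤ 2) :
    ‖riemannZeta (σ + s.im * I) - riemannZeta s‖ ≤ 240 * L ^ 2 * (σ - s.re) := by
  have key := norm_image_sub_le_of_norm_deriv_le_segment' (a := s.re) (b := σ)
    (f := fun x : ℝ ↦ riemannZeta (x + s.im * I))
    (f' := fun x : ℝ ↦ deriv riemannZeta (x + s.im * I)) (C := 240 * L ^ 2)
    (fun x _ ↦ ?_) (fun x hx ↦ ?_) σ ⟨hσ, le_rfl⟩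
  · simpa only [re_add_im] using key
  · have hne : (x : ℂ) + s.im * I ≠ 1 := by
      intro h
      have him0 : s.im = 0 := by simpa using congrArg im h
      norm_num [him0] at him
    have hline : HasDerivAt (fun z : ℂ ↦ z + s.im * I) 1 x := (hasDerivAt_id _).add_const _
    have hcomp := ((differentiableAt_riemannZeta hne).hasDerivAt.comp (x : ℂ) hline).comp_ofReal
    rw [mul_one] at hcomp
    exact hcomp.hasDerivWithinAt
  · exact norm_deriv_riemannZeta_le hL (by simpa using hre.trans hx.1)
      (by simpa using hx.2.le.trans hσ') (by simpa using him) (by simpa using him')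

lemma div_pow_le_one_div_four_mul {a L : ℝ} (ha : a ≤ 1) (hL : 3 ≤ L) :
    a / L ^ 9 ≤ 1 / (4 * L) := by
  have hpow : (4 : ℝ) ≤ L ^ 8 := by
    have : (3 : ℝ) ^ 8 ≤ L ^ 8 := by gcongr
    linarith
  calc a / L ^ 9 ≤ 1 / L ^ 9 := by gcongr
    _ ≤ 1 / (4 * L) := one_div_le_one_div_of_le (by linarith) (by
      rw [pow_succ]
      gcongr)

lemma exists_le_norm_riemannZeta :
    ∃ a c : ℝ, 0 < a ∧ a ≤ 1 ∧ 0 < c ∧ ∀ L : ℝ, 3 ≤ L → ∀ s : ℂ, 1 - a / L ^ 9 ≤ s.re →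
      s.re ≤ 2 → 1 ≤ |s.im| → |s.im| ≤ Real.exp L → c / L ^ 7 ≤ ‖riemannZeta s‖ := by
  obtain ⟨D, hD1, hD⟩ := exists_pow_three_le_norm_riemannZeta_pow_four
  set b := 1 / (960 * D) with hb
  have hb0 : 0 < b := by positivity
  have hbD : 960 * D * b = 1 := by rw [hb]; field
  have hb1 : b ^ 4 ≤ 1 := pow_le_one₀ hb0.le (by nlinarith)
  refine ⟨b ^ 4, b ^ 3 / (2 * D), by positivity, hb1, by positivity,
    fun L hL s hre hre' him him' ↦ ?_⟩
  have hη := div_pow_le_one_div_four_mul hb1 hL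
  have hη0 : 0 < b ^ 4 / L ^ 9 := by positivity
  have hrad : 1 / (4 * L) ≤ 1 / 12 := one_div_le_one_div_of_le (by norm_num) (by linarith)
  obtain ⟨σ, hσ, hση, hσ2, hσ'⟩ : ∃ σ, s.re ≤ σ ∧ 1 + b ^ 4 / L ^ 9 ≤ σ ∧ σ ≤ 2 ∧
      σ - s.re ≤ 2 * (b ^ 4 / L ^ 9) :=
    ⟨max s.re (1 + b ^ 4 / L ^ 9), le_max_left _ _, le_max_right _ _,
      max_le hre' (by linarith), by rw [sub_le_iff_le_add]; apply max_le <;> linarith⟩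
  have hshift : b ^ 3 / (D * L ^ 7) ≤ ‖riemannZeta (σ + s.im * I)‖ := by
    have h := hD L hL (σ + s.im * I) (by simpa using by linarith) (by simpa using hσ2)
      (by simpa using him) (by simpa using him')
    refine le_of_pow_le_pow_left₀ four_ne_zero (norm_nonneg _) ?_
    refine le_of_mul_le_mul_left ?_ (by positivity : 0 < D * L)
    calc D * L * (b ^ 3 / (D * L ^ 7)) ^ 4 = (b ^ 4 / L ^ 9) ^ 3 / D ^ 3 := by field
      _ ≤ (b ^ 4 / L ^ 9) ^ 3 := div_le_self (by positivity) (one_le_pow₀ hD1)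
      _ ≤ (σ - 1) ^ 3 := by gcongr; linarith
      _ ≤ D * L * ‖riemannZeta (σ + s.im * I)‖ ^ 4 := by simpa using h
  have hmove : ‖riemannZeta (σ + s.im * I) - riemannZeta s‖ ≤ b ^ 3 / (D * L ^ 7) / 2 :=
    calc _ ≤ 240 * L ^ 2 * (σ - s.re) := norm_riemannZeta_sub_le hL (by linarith) him him' hσ hσ2
      _ ≤ 240 * L ^ 2 * (2 * (b ^ 4 / L ^ 9)) := by gcongr
      _ = 960 * D * b * (b ^ 3 / (D * L ^ 7) / 2) := by field
      _ = b ^ 3 / (D * L ^ 7) / 2 := by rw [hbD, one_mul]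
  have htri := norm_sub_norm_le (riemannZeta (σ + s.im * I)) (riemannZeta s)
  have hhalf : b ^ 3 / (2 * D) / L ^ 7 = b ^ 3 / (D * L ^ 7) / 2 := by field
  linarith

/-- The analytic continuation of `∑ (Λ n - 1) * n ^ (-s) = -ζ'/ζ - ζ`, written in terms of
`ζ₁ s = (s - 1) * ζ s` and `ζ₀ s = ζ s - 1 / (s - 1)` so that the two poles at `s = 1` cancel. -/
noncomputable def zetaDefect (s : ℂ) : ℂ := -logDeriv riemannZeta₁ s - riemannZeta₀ s

lemma riemannZeta₁_eq_sub_one_mul {s : ℂ} (hs : s ≠ 1) :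
    riemannZeta₁ s = (s - 1) * riemannZeta s := by
  rw [riemannZeta_eq_inv_sub_mul hs, mul_inv_cancel_left₀ (sub_ne_zero.mpr hs)]

lemma zetaDefect_eq {s : ℂ} (hs : s ≠ 1) (hζ : riemannZeta s ≠ 0) :
    zetaDefect s = -logDeriv riemannZeta s - riemannZeta s := by
  have hs' : s - 1 ≠ 0 := sub_ne_zero.mpr hs
  have hprod : riemannZeta₁ =ᶠ[𝓝 s] fun z ↦ (z - 1) * riemannZeta z := by
    filter_upwards [isOpen_ne.mem_nhds hs] with z hz using riemannZeta₁_eq_sub_one_mul hz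
  have hlog : logDeriv riemannZeta₁ s = (s - 1)⁻¹ + logDeriv riemannZeta s := by
    rw [(logDeriv_congr_nhds hprod).eq_of_nhds,
      logDeriv_mul s hs' hζ (by fun_prop) (differentiableAt_riemannZeta hs)]
    simp [logDeriv_apply]
  rw [zetaDefect, hlog, riemannZeta_eq_inv_sub_add hs]
  ring

lemma differentiableAt_zetaDefect {s : ℂ} (hs : riemannZeta₁ s ≠ 0) :
    DifferentiableAt ℂ zetaDefect s :=
  ((differentiable_riemannZeta₁.deriv s).div (differentiable_riemannZeta₁ s) hs).neg.sub
    (differentiable_riemannZeta₀ s)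

lemma riemannZeta₁_ne_zero_of_one_le_re {s : ℂ} (hs : 1 ≤ s.re) : riemannZeta₁ s ≠ 0 := by
  rcases eq_or_ne s 1 with rfl | hs1
  · simp
  · rw [riemannZeta₁_eq_sub_one_mul hs1]
    exact mul_ne_zero (sub_ne_zero.mpr hs1) (riemannZeta_ne_zero_of_one_le_re hs)

lemma exists_riemannZeta₁_ne_zero_of_abs_im_le_one :
    ∃ δ : ℝ, 0 < δ ∧ ∀ s : ℂ, 1 - δ ≤ s.re → s.re ≤ 2 → |s.im| ≤ 1 → riemannZeta₁ s ≠ 0 := by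
  obtain ⟨δ, hδ, hsub⟩ := (isCompact_Icc.reProdIm isCompact_Icc).exists_thickening_subset_open
    (s := Set.Icc 1 2 ×ℂ Set.Icc (-1) 1)
    (isOpen_ne_fun differentiable_riemannZeta₁.continuous continuous_const)
    fun s hs ↦ riemannZeta₁_ne_zero_of_one_le_re hs.1.1
  refine ⟨δ / 2, half_pos hδ, fun s hre hre' him ↦ hsub (Metric.mem_thickening_iff.mpr
    ⟨(max 1 s.re : ℝ) + s.im * I, ⟨by simpa using hre', by simpa using abs_le.mp him⟩, ?_⟩)⟩
  have hdist : s - ((max 1 s.re : ℝ) + s.im * I) = ((s.re - max 1 s.re : ℝ) : ℂ) := by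
    apply Complex.ext <;> simp
  rw [dist_eq_norm, hdist, norm_real, Real.norm_eq_abs, abs_lt]
  rcases max_cases 1 s.re with h | h <;> constructor <;> linarith

lemma exists_norm_zetaDefect_le_of_abs_im_le_one :
    ∃ δ C : ℝ, 0 < δ ∧ ∀ s : ℂ, 1 - δ ≤ s.re → s.re ≤ 2 → |s.im| ≤ 1 →
      riemannZeta₁ s ≠ 0 ∧ ‖zetaDefect s‖ ≤ C := by
  obtain ⟨δ, hδ, hne⟩ := exists_riemannZeta₁_ne_zero_of_abs_im_le_one
  obtain ⟨C, hC⟩ := (isCompact_Icc.reProdIm isCompact_Icc).exists_bound_of_continuousOn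
    (s := Set.Icc (1 - δ) 2 ×ℂ Set.Icc (-1) 1) (f := zetaDefect) fun s hs ↦
      (differentiableAt_zetaDefect
        (hne s hs.1.1 hs.1.2 (abs_le.mpr hs.2))).continuousAt.continuousWithinAt
  exact ⟨δ, C, hδ, fun s h₁ h₂ h₃ ↦ ⟨hne s h₁ h₂ h₃, hC s ⟨⟨h₁, h₂⟩, abs_le.mp h₃⟩⟩⟩

lemma exists_norm_zetaDefect_le_of_one_le_abs_im :
    ∃ a K : ℝ, 0 < a ∧ ∀ L : ℝ, 3 ≤ L → ∀ s : ℂ, 1 - a / L ^ 9 ≤ s.re → s.re ≤ 2 →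
      1 ≤ |s.im| → |s.im| ≤ Real.exp L → riemannZeta₁ s ≠ 0 ∧ ‖zetaDefect s‖ ≤ K * L ^ 9 := by
  obtain ⟨a, c, ha, ha1, hc, hlower⟩ := exists_le_norm_riemannZeta
  refine ⟨a, 240 / c + 30, ha, fun L hL s hre hre' him him' ↦ ?_⟩
  have hζpos : 0 < ‖riemannZeta s‖ :=
    lt_of_lt_of_le (by positivity) (hlower L hL s hre hre' him him')
  have hζ : riemannZeta s ≠ 0 := norm_pos_iff.mp hζpos
  have hs1 : s ≠ 1 := by rintro rfl; norm_num at him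
  have hη := div_pow_le_one_div_four_mul ha1 hL
  have hη' : 1 / (4 * L) ≤ 1 / L := one_div_le_one_div_of_le (by linarith) (by linarith)
  have hlog : ‖logDeriv riemannZeta s‖ ≤ 240 / c * L ^ 9 := by
    rw [logDeriv_apply, norm_div, div_le_iff₀ hζpos]
    calc ‖deriv riemannZeta s‖ ≤ 240 * L ^ 2 :=
          norm_deriv_riemannZeta_le hL (by linarith) hre' him him'
      _ = 240 / c * L ^ 9 * (c / L ^ 7) := by field
      _ ≤ 240 / c * L ^ 9 * ‖riemannZeta s‖ := by gcongr; exact hlower L hL s hre hre' him him'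
  have hval : ‖riemannZeta s‖ ≤ 30 * L :=
    norm_riemannZeta_le_of_abs_im_le_exp hL (by linarith) (by linarith) (by linarith) him'
  refine ⟨?_, ?_⟩
  · rw [riemannZeta₁_eq_sub_one_mul hs1]
    exact mul_ne_zero (sub_ne_zero.mpr hs1) hζ
  · rw [zetaDefect_eq hs1 hζ]
    have htri := norm_sub_le (-logDeriv riemannZeta s) (riemannZeta s)
    rw [norm_neg] at htri
    have hpow : L ≤ L ^ 9 := le_self_pow₀ (by linarith) (by norm_num)
    linarith

lemma eventually_norm_zetaDefect_le :
    ∀ᶠ L : ℝ in atTop, ∀ s : ℂ, 1 - 1 / L ^ 10 ≤ s.re → s.re ≤ 2 → |s.im| ≤ Real.exp L →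
      riemannZeta₁ s ≠ 0 ∧ ‖zetaDefect s‖ ≤ L ^ 10 := by
  obtain ⟨δ, C, hδ, hlow⟩ := exists_norm_zetaDefect_le_of_abs_im_le_one
  obtain ⟨a, K, ha, hhigh⟩ := exists_norm_zetaDefect_le_of_one_le_abs_im
  filter_upwards [eventually_ge_atTop 3, eventually_ge_atTop C, eventually_ge_atTop K,
    eventually_ge_atTop (1 / δ), eventually_ge_atTop (1 / a)]
    with L hL hLC hLK hLδ hLa s hre hre' him
  have hLpow : L ≤ L ^ 10 := le_self_pow₀ (by linarith) (by norm_num)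
  have hL0 : 0 < L := by linarith
  rcases le_total |s.im| 1 with him1 | him1
  · have hwidth : 1 / L ^ 10 ≤ δ := (one_div_le (by positivity) hδ).mpr (hLδ.trans hLpow)
    obtain ⟨hne, hle⟩ := hlow s (by linarith) hre' him1
    exact ⟨hne, hle.trans (by linarith)⟩
  · have hwidth : 1 / L ^ 10 ≤ a / L ^ 9 := by
      rw [div_le_iff₀ (by positivity)]
      calc 1 ≤ a * L := by rwa [div_le_iff₀' ha] at hLa
        _ = a / L ^ 9 * L ^ 10 := by field
    obtain ⟨hne, hle⟩ := hhigh L hL s (by linarith) hre' him1 him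
    refine ⟨hne, hle.trans ?_⟩
    calc K * L ^ 9 ≤ L * L ^ 9 := by gcongr
      _ = L ^ 10 := by ring

end ZeroFreeRegion

section Perron
open Complex Filter MeasureTheory Set Topology

lemma norm_ofReal_add_mul_I_sq (σ t : ℝ) : ‖((σ : ℂ) + t * I) ^ 2‖ = σ ^ 2 + t ^ 2 := by
  rw [norm_pow, ← normSq_eq_norm_sq, normSq_add_mul_I]

lemma ofReal_add_mul_I_ne_zero {σ : ℝ} (hσ : σ ≠ 0) (t : ℝ) : (σ : ℂ) + t * I ≠ 0 := by
  intro h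
  simpa [hσ] using congrArg re h

lemma continuous_cexp_mul_div_sq (y : ℝ) {σ : ℝ} (hσ : σ ≠ 0) :
    Continuous fun t : ℝ ↦ cexp (y * (σ + t * I)) / (σ + t * I) ^ 2 := by
  have hne (t : ℝ) : ((σ : ℂ) + t * I) ^ 2 ≠ 0 := pow_ne_zero 2 (ofReal_add_mul_I_ne_zero hσ t)
  fun_prop (disch := exact hne _)

lemma norm_cexp_mul_div_sq (y σ t : ℝ) :
    ‖cexp (y * (σ + t * I)) / (σ + t * I) ^ 2‖ = Real.exp (y * σ) * (σ ^ 2 + t ^ 2)⁻¹ := by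
  rw [norm_div, norm_ofReal_add_mul_I_sq, norm_exp, div_eq_mul_inv]
  simp

lemma integrable_cexp_mul_div_sq (y : ℝ) {σ : ℝ} (hσ : σ ≠ 0) :
    Integrable fun t : ℝ ↦ cexp (y * (σ + t * I)) / (σ + t * I) ^ 2 := by
  refine (integrable_norm_iff
    (continuous_cexp_mul_div_sq y hσ).aestronglyMeasurable).mp ?_
  simp only [norm_cexp_mul_div_sq]
  refine ((((integrable_inv_one_add_sq).comp_div hσ).const_mul
    (σ ^ 2)⁻¹).const_mul (Real.exp (y * σ))).congr (.of_forall fun t ↦ ?_)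
  simp only
  rw [← mul_inv, div_pow, mul_add, mul_one, mul_div_cancel₀ _ (pow_ne_zero 2 hσ)]

lemma log_smul_indicator_Ioc {t : ℝ} (ht : 0 < t) :
    Real.log t • indicator (Ioc 0 1) (fun _ ↦ (1 : ℂ)) t = ((min (Real.log t) 0 : ℝ) : ℂ) := by
  rcases le_or_gt t 1 with h | h
  · rw [indicator_of_mem (mem_Ioc.mpr ⟨ht, h⟩), min_eq_left (Real.log_nonpos ht.le h),
      real_smul, mul_one]
  · rw [indicator_of_notMem (by simp [h]), min_eq_right (Real.log_nonneg h.le), smul_zero,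
      ofReal_zero]

lemma hasMellin_min_log_zero {s : ℂ} (hs : 0 < s.re) :
    HasMellin (fun t : ℝ ↦ ((min (Real.log t) 0 : ℝ) : ℂ)) s (-1 / s ^ 2) := by
  have hs0 : s ≠ 0 := by rintro rfl; simp at hs
  set f : ℝ → ℂ := indicator (Ioc 0 1) fun _ ↦ 1 with hf
  have hint : LocallyIntegrableOn f (Ioi 0) := by
    refine (Integrable.locallyIntegrable ?_).locallyIntegrableOn _
    exact (integrable_indicator_iff measurableSet_Ioc).mpr (integrableOn_const (by simp))
  have htop : f =O[atTop] fun t ↦ t ^ (-(s.re + 1)) := by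
    refine (Asymptotics.isBigO_zero _ _).congr' ?_ .rfl
    filter_upwards [eventually_gt_atTop 1] with t ht
    exact (indicator_of_notMem (by simp [ht]) _).symm
  have hzero : f =O[𝓝[>] 0] fun t ↦ t ^ (-(0 : ℝ)) := by
    refine .of_bound 1 (.of_forall fun t ↦ ?_)
    simpa using norm_indicator_le_norm_self (fun _ ↦ (1 : ℂ)) t
  obtain ⟨hconv, hderiv⟩ :=
    mellin_hasDerivAt_of_isBigO_rpow hint htop (lt_add_one s.re) hzero hs
  have hinv : HasDerivAt (mellin f) (-1 / s ^ 2) s := by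
    rw [neg_div, one_div]
    refine (hasDerivAt_inv hs0).congr_of_eventuallyEq ?_
    filter_upwards [(isOpen_lt continuous_const continuous_re).mem_nhds hs] with z hz
    rw [(hasMellin_one_Ioc hz).2, one_div]
  have hlog : EqOn (fun t : ℝ ↦ (t : ℂ) ^ (s - 1) • Real.log t • f t)
      (fun t ↦ (t : ℂ) ^ (s - 1) • ((min (Real.log t) 0 : ℝ) : ℂ)) (Ioi 0) := fun t ht ↦ by
    simp only [hf, log_smul_indicator_Ioc ht]
  exact ⟨(integrableOn_congr_fun hlog measurableSet_Ioi).mp hconv,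
    (setIntegral_congr_fun measurableSet_Ioi hlog).symm.trans (hderiv.unique hinv)⟩

lemma integral_cexp_mul_div_sq {σ : ℝ} (hσ : 0 < σ) (u : ℝ) :
    ∫ t : ℝ, cexp (u * (σ + t * I)) / (σ + t * I) ^ 2 =
      ((2 * Real.pi * max u 0 : ℝ) : ℂ) := by
  set f : ℝ → ℂ := fun t ↦ ((min (Real.log t) 0 : ℝ) : ℂ) with hf
  have hmellin (t : ℝ) : HasMellin f (σ + t * I) (-1 / (σ + t * I) ^ 2) :=
    hasMellin_min_log_zero (by simpa using hσ)
  have hconv : MellinConvergent f σ := by simpa using (hmellin 0).1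
  have hvert : VerticalIntegrable (mellin f) σ := by
    refine (integrable_cexp_mul_div_sq 0 hσ.ne').neg.congr (.of_forall fun t ↦ ?_)
    simp [(hmellin t).2, neg_div]
  have hcont : ContinuousAt f (Real.exp (-u)) :=
    continuous_ofReal.continuousAt.comp
      ((Real.continuousAt_log (Real.exp_pos _).ne').min continuousAt_const)
  have hinv := mellinInv_mellin_eq σ f (Real.exp_pos (-u)) hconv hvert hcont
  have hintegrand (t : ℝ) :
      ((Real.exp (-u) : ℝ) : ℂ) ^ (-((σ : ℂ) + t * I)) • mellin f (σ + t * I) =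
        -(cexp (u * (σ + t * I)) / (σ + t * I) ^ 2) := by
    rw [(hmellin t).2, cpow_def_of_ne_zero (by simp), ← ofReal_log (Real.exp_pos _).le,
      Real.log_exp, ofReal_neg, neg_mul_neg, smul_eq_mul]
    ring
  have hmin : f (Real.exp (-u)) = -((max u 0 : ℝ) : ℂ) := by
    simp only [hf, Real.log_exp]
    rw [← ofReal_neg, ← min_neg_neg, neg_zero]
  have hpi : ((2 * Real.pi : ℝ) : ℂ) ≠ 0 := ofReal_ne_zero.mpr Real.two_pi_pos.ne'
  rwa [mellinInv, integral_congr_ae (.of_forall hintegrand), integral_neg, hmin, real_smul,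
    one_div, ofReal_inv, inv_mul_eq_iff_eq_mul₀ hpi, mul_neg, neg_inj, ← ofReal_mul] at hinv

end Perron

section SmoothedDefect
open Complex Filter MeasureTheory Set Topology
open scoped ArithmeticFunction.vonMangoldt

/-- The coefficients of the Dirichlet series of `zetaDefect`, that is `Λ n - 1` for `n ≥ 1`. The
value at `0`, which no Dirichlet series sees, is `0` so that sums over `ℕ` start at `1`. -/
noncomputable def vonMangoldtDefect (n : ℕ) : ℝ := if n = 0 then 0 else Λ n - 1

/-- The logarithmically weighted sum `∑_{n ≤ exp y} (Λ n - 1) (y - log n)`, whose smallness is the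
form of the prime number theorem needed here. -/
noncomputable def smoothedDefect (y : ℝ) : ℝ :=
  ∑' n : ℕ, vonMangoldtDefect n * max (y - Real.log n) 0

lemma norm_vonMangoldtDefect_le (n : ℕ) : ‖vonMangoldtDefect n‖ ≤ Λ n + 1 := by
  have hΛ : 0 ≤ Λ n := ArithmeticFunction.vonMangoldt_nonneg
  unfold vonMangoldtDefect
  split_ifs with hn
  · rw [norm_zero]
    positivity
  · exact (norm_sub_le _ _).trans (by rw [Real.norm_of_nonneg hΛ, norm_one])

lemma vonMangoldtDefect_eq {n : ℕ} (hn : n ≠ 0) :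
    (vonMangoldtDefect n : ℂ) = ((fun n ↦ (Λ n : ℂ)) - 1) n := by
  simp [vonMangoldtDefect, hn]

lemma lseriesSummable_vonMangoldtDefect {s : ℂ} (hs : 1 < s.re) :
    LSeriesSummable (fun n ↦ (vonMangoldtDefect n : ℂ)) s :=
  (LSeriesSummable_congr s vonMangoldtDefect_eq).mpr
    ((ArithmeticFunction.LSeriesSummable_vonMangoldt hs).sub (LSeriesSummable_one_iff.mpr hs))

lemma lseries_vonMangoldtDefect {s : ℂ} (hs : 1 < s.re) :
    LSeries (fun n ↦ (vonMangoldtDefect n : ℂ)) s = zetaDefect s := by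
  have hs1 : s ≠ 1 := by rintro rfl; simp at hs
  rw [LSeries_congr vonMangoldtDefect_eq,
    LSeries_sub (ArithmeticFunction.LSeriesSummable_vonMangoldt hs)
      (LSeriesSummable_one_iff.mpr hs),
    ArithmeticFunction.LSeries_vonMangoldt_eq_deriv_riemannZeta_div hs,
    LSeries_one_eq_riemannZeta hs, zetaDefect_eq hs1 (riemannZeta_ne_zero_of_one_lt_re hs),
    logDeriv_apply, neg_div]

lemma tsum_norm_term_ofReal {f : ℕ → ℝ} (hf : ∀ n, 0 ≤ f n) (x : ℝ) :
    ∑' n, ‖LSeries.term (fun n ↦ (f n : ℂ)) x n‖ = ‖LSeries (fun n ↦ (f n : ℂ)) x‖ := by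
  have hterm (n : ℕ) : LSeries.term (fun n ↦ (f n : ℂ)) x n =
      (‖LSeries.term (fun n ↦ (f n : ℂ)) x n‖ : ℝ) := by
    rw [LSeries.norm_term_eq, LSeries.term_def]
    split_ifs with hn
    · simp
    · rw [norm_real, Real.norm_of_nonneg (hf n), ofReal_div, ofReal_re,
        ofReal_cpow (Nat.cast_nonneg n), ofReal_natCast]
  rw [LSeries, tsum_congr hterm, ← ofReal_tsum, norm_real,
    Real.norm_of_nonneg (tsum_nonneg fun n ↦ norm_nonneg _)]

lemma norm_term_add_mul_I (f : ℕ → ℂ) (c t : ℝ) (n : ℕ) :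
    ‖LSeries.term f (c + t * I) n‖ = ‖LSeries.term f c n‖ := by
  simp [LSeries.norm_term_eq]

lemma exists_tsum_norm_term_vonMangoldtDefect_le : ∃ C : ℝ, ∀ ε, 0 < ε → ε ≤ 1 →
    ∑' n, ‖LSeries.term (fun n ↦ (vonMangoldtDefect n : ℂ)) (1 + ε : ℝ) n‖ ≤ C / ε := by
  obtain ⟨δ, C, hδ, hC⟩ := exists_norm_zetaDefect_le_of_abs_im_le_one
  obtain ⟨C', -, hC'⟩ := exists_norm_riemannZeta_one_add_le
  refine ⟨C + 2 * C', fun ε hε hε1 ↦ ?_⟩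
  have hre : 1 < ((1 + ε : ℝ) : ℂ).re := by simpa using hε
  have hs1 : ((1 + ε : ℝ) : ℂ) ≠ 1 := by rw [Ne, ofReal_eq_one]; linarith
  have hdefect := (hC (1 + ε : ℝ) (by rw [ofReal_re]; linarith) (by rw [ofReal_re]; linarith)
    (by simp)).2
  have hzeta : ‖riemannZeta (1 + ε : ℝ)‖ ≤ C' / ε := by simpa using hC' ε hε hε1
  have hΛ := ArithmeticFunction.LSeriesSummable_vonMangoldt hre
  have hone := LSeriesSummable_one_iff.mpr hre
  have hcoeff : (fun n ↦ ((Λ n + 1 : ℝ) : ℂ)) = (fun n ↦ (Λ n : ℂ)) + 1 := by ext n; simp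
  have hsummable : LSeriesSummable (fun n ↦ ((Λ n + 1 : ℝ) : ℂ)) (1 + ε : ℝ) :=
    hcoeff ▸ hΛ.add hone
  have hsum : LSeries (fun n ↦ ((Λ n + 1 : ℝ) : ℂ)) (1 + ε : ℝ) =
      zetaDefect (1 + ε : ℝ) + 2 * riemannZeta (1 + ε : ℝ) := by
    rw [hcoeff, LSeries_add hΛ hone,
      ArithmeticFunction.LSeries_vonMangoldt_eq_deriv_riemannZeta_div hre,
      LSeries_one_eq_riemannZeta hre, zetaDefect_eq hs1 (riemannZeta_ne_zero_of_one_lt_re hre),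
      logDeriv_apply]
    ring
  calc _ ≤ ∑' n, ‖LSeries.term (fun n ↦ ((Λ n + 1 : ℝ) : ℂ)) (1 + ε : ℝ) n‖ := by
        refine (lseriesSummable_vonMangoldtDefect hre).norm.tsum_le_tsum
          (fun n ↦ LSeries.norm_term_le _ ?_) hsummable.norm
        rw [norm_real, norm_real]
        exact (norm_vonMangoldtDefect_le n).trans (Real.le_norm_self _)
    _ = ‖zetaDefect (1 + ε : ℝ) + 2 * riemannZeta (1 + ε : ℝ)‖ := by
        rw [tsum_norm_term_ofReal
          fun n ↦ add_nonneg ArithmeticFunction.vonMangoldt_nonneg zero_le_one, hsum]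
    _ ≤ C + 2 * (C' / ε) := by
        refine (norm_add_le _ _).trans ?_
        rw [norm_mul, norm_ofNat]
        gcongr
    _ ≤ C / ε + 2 * (C' / ε) := by
        gcongr
        exact le_div_self ((norm_nonneg _).trans hdefect) hε hε1
    _ = _ := by ring

lemma exists_norm_zetaDefect_one_add_le : ∃ C : ℝ, ∀ ε t : ℝ, 0 < ε → ε ≤ 1 →
    ‖zetaDefect ((1 + ε : ℝ) + t * I)‖ ≤ C / ε := by
  obtain ⟨C, hC⟩ := exists_tsum_norm_term_vonMangoldtDefect_le
  refine ⟨C, fun ε t hε hε1 ↦ ?_⟩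
  have hre : 1 < (((1 + ε : ℝ) : ℂ) + t * I).re := by simpa using hε
  rw [← lseries_vonMangoldtDefect hre]
  refine (norm_tsum_le_tsum_norm (lseriesSummable_vonMangoldtDefect hre).norm).trans ?_
  simp only [norm_term_add_mul_I]
  exact hC ε hε hε1

lemma hasSum_smoothedDefect (y : ℝ) :
    HasSum (fun n : ℕ ↦ vonMangoldtDefect n * max (y - Real.log n) 0) (smoothedDefect y) := by
  refine (summable_of_ne_finset_zero (s := Finset.range (⌈Real.exp y⌉₊ + 1)) ?_).hasSum
  intro n hn
  have hyn : Real.exp y ≤ n := Nat.ceil_le.mp (by rw [Finset.mem_range] at hn; lia)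
  have hlog : y ≤ Real.log n := (Real.le_log_iff_exp_le ((Real.exp_pos y).trans_le hyn)).mpr hyn
  rw [max_eq_right (by linarith), mul_zero]

lemma continuous_term_add_mul_I (f : ℕ → ℂ) (c : ℝ) (n : ℕ) :
    Continuous fun t : ℝ ↦ LSeries.term f (c + t * I) n := by
  rcases eq_or_ne n 0 with rfl | hn
  · simpa only [LSeries.term_zero] using continuous_const
  · simp only [LSeries.term_of_ne_zero hn]
    have hn' : (n : ℂ) ≠ 0 := Nat.cast_ne_zero.mpr hn
    exact continuous_const.div (.const_cpow (by fun_prop) (.inl hn'))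
      fun t ↦ by simp [cpow_eq_zero_iff, hn]

lemma integral_term_mul_cexp_mul_div_sq {c : ℝ} (hc : 0 < c) (y : ℝ) (n : ℕ) :
    ∫ t : ℝ, LSeries.term (fun n ↦ (vonMangoldtDefect n : ℂ)) (c + t * I) n *
      (cexp (y * (c + t * I)) / (c + t * I) ^ 2) =
        ((2 * Real.pi * (vonMangoldtDefect n * max (y - Real.log n) 0) : ℝ) : ℂ) := by
  rcases eq_or_ne n 0 with rfl | hn
  · simp [vonMangoldtDefect]
  have hintegrand (t : ℝ) : LSeries.term (fun n ↦ (vonMangoldtDefect n : ℂ)) (c + t * I) n *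
      (cexp (y * (c + t * I)) / (c + t * I) ^ 2) =
      vonMangoldtDefect n *
        (cexp ((y - Real.log n : ℝ) * (c + t * I)) / (c + t * I) ^ 2) := by
    rw [LSeries.term_of_ne_zero hn, cpow_def_of_ne_zero (Nat.cast_ne_zero.mpr hn),
      ← ofReal_natCast, ← ofReal_log (Nat.cast_nonneg n), ofReal_sub, sub_mul, Complex.exp_sub]
    ring
  simp only [hintegrand]
  rw [integral_const_mul, integral_cexp_mul_div_sq hc, ← ofReal_mul]
  congr 1
  ring

lemma integral_zetaDefect_mul {c : ℝ} (hc : 1 < c) (y : ℝ) :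
    ∫ t : ℝ, zetaDefect (c + t * I) * (cexp (y * (c + t * I)) / (c + t * I) ^ 2) =
      ((2 * Real.pi * smoothedDefect y : ℝ) : ℂ) := by
  have hc0 : 0 < c := one_pos.trans hc
  set d : ℕ → ℂ := fun n ↦ vonMangoldtDefect n
  set k : ℝ → ℂ := fun t ↦ cexp (y * (c + t * I)) / (c + t * I) ^ 2
  have hk : Integrable k := integrable_cexp_mul_div_sq y hc0.ne'
  have hnorm (n : ℕ) (t : ℝ) :
      ‖LSeries.term d (c + t * I) n * k t‖ = ‖LSeries.term d c n‖ * ‖k t‖ := by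
    rw [norm_mul, norm_term_add_mul_I]
  have hint (n : ℕ) : Integrable fun t : ℝ ↦ LSeries.term d (c + t * I) n * k t :=
    (hk.norm.const_mul ‖LSeries.term d c n‖).mono'
      ((continuous_term_add_mul_I d c n).mul
        (continuous_cexp_mul_div_sq y hc0.ne')).aestronglyMeasurable
      (.of_forall fun t ↦ (hnorm n t).le)
  have hsummable : Summable fun n ↦ ∫ t : ℝ, ‖LSeries.term d (c + t * I) n * k t‖ := by
    simp only [hnorm, integral_const_mul]
    exact (lseriesSummable_vonMangoldtDefect (s := c) (by simpa using hc)).norm.mul_right _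
  have hseries (t : ℝ) :
      ∑' n, LSeries.term d (c + t * I) n * k t = zetaDefect (c + t * I) * k t := by
    rw [tsum_mul_right, ← lseries_vonMangoldtDefect (by simpa using hc), LSeries]
  have hsum := hasSum_integral_of_summable_integral_norm hint hsummable
  simp only [hseries, d, k, integral_term_mul_cexp_mul_div_sq hc0 y] at hsum
  exact hsum.unique (ofRealCLM.hasSum ((hasSum_smoothedDefect y).mul_left (2 * Real.pi)))

end SmoothedDefect

section ContourShift
open Complex Filter MeasureTheory Set Topology

lemma integral_Ioi_inv_one_add_sq_le {T : ℝ} (hT : 0 < T) :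
    ∫ t in Ioi T, (1 + t ^ 2)⁻¹ ≤ 1 / T := by
  rw [integral_Ioi_inv_one_add_sq, ← Real.arctan_inv_of_pos hT, one_div]
  have hle := Real.le_tan (Real.arctan_nonneg.mpr (inv_nonneg.mpr hT.le))
    (Real.arctan_lt_pi_div_two _)
  rwa [Real.tan_arctan] at hle

lemma integral_Iic_neg_inv_one_add_sq_le {T : ℝ} (hT : 0 < T) :
    ∫ t in Iic (-T), (1 + t ^ 2)⁻¹ ≤ 1 / T := by
  refine le_trans (le_of_eq ?_) (integral_Ioi_inv_one_add_sq_le hT)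
  have hreflect := integral_comp_neg_Iic (-T) fun t : ℝ ↦ (1 + t ^ 2)⁻¹
  simpa only [even_two.neg_pow, neg_neg] using hreflect

lemma norm_integral_le_of_norm_le_inv_one_add_sq {g : ℝ → ℂ} (hg : Continuous g) {B T : ℝ}
    (hT : 0 < T) (hB : 0 ≤ B) (hle : ∀ t, ‖g t‖ ≤ B * (1 + t ^ 2)⁻¹) :
    ‖∫ t, g t‖ ≤ 2 * (B / T) + ‖∫ t in -T..T, g t‖ := by
  have hdom : Integrable fun t : ℝ ↦ B * (1 + t ^ 2)⁻¹ := integrable_inv_one_add_sq.const_mul _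
  have hint : Integrable g := hdom.mono' hg.aestronglyMeasurable (.of_forall hle)
  have htail {s : Set ℝ} (hs : ∫ t in s, (1 + t ^ 2)⁻¹ ≤ 1 / T) : ‖∫ t in s, g t‖ ≤ B / T := by
    refine (norm_integral_le_of_norm_le hdom.integrableOn (.of_forall hle)).trans ?_
    rw [integral_const_mul, ← mul_one_div]
    gcongr
  have hsplit : ∫ t, g t =
      (∫ t in Iic (-T), g t) + (∫ t in -T..T, g t) + ∫ t in Ioi T, g t := by
    rw [← intervalIntegral.integral_Iic_add_Ioi (b := T) hint.integrableOn hint.integrableOn,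
      ← intervalIntegral.integral_Iic_sub_Iic hint.integrableOn hint.integrableOn]
    ring
  rw [hsplit]
  linarith [norm_add₃_le (a := ∫ t in Iic (-T), g t) (b := ∫ t in -T..T, g t)
    (c := ∫ t in Ioi T, g t), htail (integral_Iic_neg_inv_one_add_sq_le hT),
    htail (integral_Ioi_inv_one_add_sq_le hT)]

lemma norm_intervalIntegral_vertical_le {f : ℂ → ℂ} {a c T H V : ℝ} (hac : a ≤ c) (hT : 0 ≤ T)
    (hf : ∀ s : ℂ, a ≤ s.re → s.re ≤ c → |s.im| ≤ T → DifferentiableAt ℂ f s)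
    (hH : ∀ x t : ℝ, a ≤ x → x ≤ c → |t| = T → ‖f (x + t * I)‖ ≤ H)
    (hV : ∀ t : ℝ, |t| ≤ T → ‖f (a + t * I)‖ ≤ V) :
    ‖∫ t in -T..T, f (c + t * I)‖ ≤ 2 * (H * (c - a)) + V * (2 * T) := by
  have hhor {t : ℝ} (ht : |t| = T) : ‖∫ x in a..c, f (x + t * I)‖ ≤ H * (c - a) := by
    refine (intervalIntegral.norm_integral_le_of_norm_le_const fun x hx ↦ ?_).trans_eq
      (by rw [abs_of_nonneg (sub_nonneg.mpr hac)])
    rw [uIoc_of_le hac] at hx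
    exact hH x t hx.1.le hx.2 ht
  have hvert : ‖∫ t in -T..T, f (a + t * I)‖ ≤ V * (2 * T) := by
    refine (intervalIntegral.norm_integral_le_of_norm_le_const fun t ht ↦ ?_).trans_eq
      (by rw [sub_neg_eq_add, ← two_mul, abs_of_nonneg (by positivity)])
    rw [uIoc_of_le (by linarith)] at ht
    exact hV t (abs_le.mpr ⟨ht.1.le, ht.2⟩)
  have hcauchy := Complex.integral_boundary_rect_eq_zero_of_differentiableOn f ⟨a, -T⟩ ⟨c, T⟩ <| by
    intro s hs
    rw [mem_reProdIm, uIcc_of_le hac, uIcc_of_le (by simpa using hT)] at hs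
    exact (hf s hs.1.1 hs.1.2 (abs_le.mpr hs.2)).differentiableWithinAt
  have hshift : I * (∫ t in -T..T, f (c + t * I)) = I * (∫ t in -T..T, f (a + t * I))
      + (∫ x in a..c, f (x + T * I)) - ∫ x in a..c, f (x + ((-T : ℝ) : ℂ) * I) := by
    simp only [smul_eq_mul] at hcauchy
    linear_combination hcauchy
  calc _ = ‖I * ∫ t in -T..T, f (c + t * I)‖ := by rw [norm_mul, norm_I, one_mul]
    _ ≤ ‖∫ t in -T..T, f (a + t * I)‖ + ‖∫ x in a..c, f (x + T * I)‖
        + ‖∫ x in a..c, f (x + ((-T : ℝ) : ℂ) * I)‖ := by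
      rw [hshift]
      refine (norm_sub_le _ _).trans ?_
      gcongr
      exact (norm_add_le _ _).trans_eq (by rw [norm_mul, norm_I, one_mul])
    _ ≤ V * (2 * T) + H * (c - a) + H * (c - a) := by
      gcongr
      · exact hhor (abs_of_nonneg hT)
      · exact hhor (by rw [abs_neg, abs_of_nonneg hT])
    _ = _ := by ring

lemma differentiableAt_zetaDefect_mul (y : ℝ) {s : ℂ} (hs : s ≠ 0) (h : riemannZeta₁ s ≠ 0) :
    DifferentiableAt ℂ (fun s ↦ zetaDefect s * (cexp (y * s) / s ^ 2)) s :=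
  (differentiableAt_zetaDefect h).mul
    (DifferentiableAt.div (by fun_prop) (by fun_prop) (pow_ne_zero 2 hs))

lemma norm_zetaDefect_mul (y σ t : ℝ) :
    ‖zetaDefect (σ + t * I) * (cexp (y * (σ + t * I)) / (σ + t * I) ^ 2)‖ =
      ‖zetaDefect (σ + t * I)‖ * (Real.exp (y * σ) * (σ ^ 2 + t ^ 2)⁻¹) := by
  rw [norm_mul, norm_cexp_mul_div_sq]

lemma continuous_zetaDefect_mul_vertical (y : ℝ) {c : ℝ} (hc : 1 ≤ c) :
    Continuous fun t : ℝ ↦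
      zetaDefect (c + t * I) * (cexp (y * (c + t * I)) / (c + t * I) ^ 2) := by
  refine continuous_iff_continuousAt.mpr fun t ↦ ?_
  have hre : ((c : ℂ) + t * I).re = c := by simp
  have hne : (c : ℂ) + t * I ≠ 0 := fun h ↦ by
    rw [h, zero_re] at hre
    linarith
  exact ContinuousAt.comp' (f := fun t : ℝ ↦ (c : ℂ) + t * I)
    (differentiableAt_zetaDefect_mul y hne
      (riemannZeta₁_ne_zero_of_one_le_re (hc.trans_eq hre.symm))).continuousAt (by fun_prop)

lemma norm_intervalIntegral_zetaDefect_mul_le {y a c T M : ℝ} (hy : 0 ≤ y) (ha : 1 / 2 ≤ a)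
    (hac : a ≤ c) (hT : 0 < T) (hM : ∀ s : ℂ, a ≤ s.re → s.re ≤ c → |s.im| ≤ T →
      riemannZeta₁ s ≠ 0 ∧ ‖zetaDefect s‖ ≤ M) :
    ‖∫ t in -T..T, zetaDefect (c + t * I) * (cexp (y * (c + t * I)) / (c + t * I) ^ 2)‖ ≤
      2 * (M * Real.exp (y * c) / T ^ 2 * (c - a)) + 4 * M * Real.exp (y * a) * (2 * T) := by
  refine norm_intervalIntegral_vertical_le (f := fun s ↦ zetaDefect s * (cexp (y * s) / s ^ 2))
    hac hT.le (fun s has hsc hsT ↦ ?_) (fun x t hax hxc ht ↦ ?_) (fun t ht ↦ ?_)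
  · exact differentiableAt_zetaDefect_mul y (fun h ↦ by norm_num [h] at has; linarith)
      (hM s has hsc hsT).1
  · have hxt := (hM (x + t * I) (by simpa) (by simpa) (by simp [ht])).2
    have ht0 : 0 < t ^ 2 := by rw [← sq_abs, ht]; positivity
    rw [norm_zetaDefect_mul, mul_div_assoc, div_eq_mul_inv, ← ht, sq_abs]
    gcongr
    · exact (norm_nonneg _).trans hxt
    · exact le_add_of_nonneg_left (sq_nonneg x)
  · have hat := (hM (a + t * I) (by simp) (by simpa) (by simpa)).2
    have ha4 : (a ^ 2 + t ^ 2)⁻¹ ≤ 4 := by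
      rw [inv_le_comm₀ (by positivity) (by norm_num)]
      nlinarith [sq_nonneg t]
    rw [norm_zetaDefect_mul]
    calc _ ≤ M * (Real.exp (y * a) * 4) := by
          gcongr
          exact (norm_nonneg _).trans hat
      _ = _ := by ring

lemma abs_smoothedDefect_le {y a c T K M : ℝ} (hy : 0 ≤ y) (ha : 1 / 2 ≤ a) (hac : a ≤ c)
    (hc : 1 < c) (hT : 0 < T) (hK : ∀ t : ℝ, ‖zetaDefect (c + t * I)‖ ≤ K)
    (hM : ∀ s : ℂ, a ≤ s.re → s.re ≤ c → |s.im| ≤ T →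
      riemannZeta₁ s ≠ 0 ∧ ‖zetaDefect s‖ ≤ M) :
    |smoothedDefect y| ≤ 2 * (K * Real.exp (y * c) / T) +
      (2 * (M * Real.exp (y * c) / T ^ 2 * (c - a)) + 4 * M * Real.exp (y * a) * (2 * T)) := by
  have hK0 : 0 ≤ K := (norm_nonneg _).trans (hK 0)
  have hline (t : ℝ) : ‖zetaDefect (c + t * I) * (cexp (y * (c + t * I)) / (c + t * I) ^ 2)‖ ≤
      K * Real.exp (y * c) * (1 + t ^ 2)⁻¹ := by
    rw [norm_zetaDefect_mul, ← mul_assoc]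
    gcongr
    · exact hK t
    · exact one_le_pow₀ hc.le
  have hintegral : 2 * Real.pi * |smoothedDefect y| =
      ‖∫ t : ℝ, zetaDefect (c + t * I) * (cexp (y * (c + t * I)) / (c + t * I) ^ 2)‖ := by
    rw [integral_zetaDefect_mul hc, norm_real, Real.norm_eq_abs, abs_mul,
      abs_of_pos Real.two_pi_pos]
  calc _ ≤ 2 * Real.pi * |smoothedDefect y| :=
        le_mul_of_one_le_left (abs_nonneg _) (by linarith [Real.pi_gt_three])
    _ ≤ _ := hintegral.trans_le <|
      (norm_integral_le_of_norm_le_inv_one_add_sq (continuous_zetaDefect_mul_vertical y hc.le) hT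
        (by positivity) hline).trans <| by
        gcongr
        exact norm_intervalIntegral_zetaDefect_mul_le hy ha hac hT hM

lemma eventually_const_mul_pow_le_exp (K : ℝ) (n : ℕ) {b : ℝ} (hb : 0 < b) :
    ∀ᶠ x in atTop, K * x ^ n ≤ Real.exp (b * x) := by
  filter_upwards [((isLittleO_pow_exp_pos_mul_atTop n hb).const_mul_left K).bound one_pos]
    with x hx
  simpa only [one_mul, Real.norm_of_nonneg (Real.exp_pos _).le] using (Real.le_norm_self _).trans hx

lemma eventually_abs_smoothedDefect_pow_le :
    ∀ᶠ L in atTop, |smoothedDefect (L ^ 20)| ≤ Real.exp (L ^ 20 - L / 2) := by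
  obtain ⟨C, hC⟩ := exists_norm_zetaDefect_one_add_le
  filter_upwards [eventually_norm_zetaDefect_le, eventually_ge_atTop 3,
    eventually_const_mul_pow_le_exp (2 * C * Real.exp 1 + 4 * Real.exp 1 + 8) 20 one_half_pos]
    with L hzero hL hexp
  have hL3 : 3 * L ≤ L ^ 10 := by
    calc 3 * L ≤ L ^ 9 * L := by
          gcongr
          exact hL.trans (le_self_pow₀ (by linarith) (by norm_num))
      _ = L ^ 10 := by ring
  have hy : 1 ≤ L ^ 20 := one_le_pow₀ (by linarith)
  have ha : 1 / L ^ 10 ≤ 1 / 2 := one_div_le_one_div_of_le two_pos (by linarith)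
  have ha0 : 0 < 1 / L ^ 10 := by positivity
  have hc0 : 0 < 1 / L ^ 20 := by positivity
  have hc1 : 1 / L ^ 20 ≤ 1 := div_le_one_of_le₀ hy (by positivity)
  have hbound := abs_smoothedDefect_le (y := L ^ 20) (a := 1 - 1 / L ^ 10) (c := 1 + 1 / L ^ 20)
    (by positivity) (by linarith) (by linarith) (by linarith) (Real.exp_pos L)
    (fun t ↦ hC _ t hc0 hc1) (fun s hs hs' ↦ hzero s hs (by linarith))
  set E := Real.exp (L ^ 20 - L) with hE
  have hright : Real.exp (L ^ 20 * (1 + 1 / L ^ 20)) = Real.exp 1 * E * Real.exp L := by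
    rw [hE, ← Real.exp_add, ← Real.exp_add]
    congr 1
    field
  have hleft : Real.exp (L ^ 20 * (1 - 1 / L ^ 10)) * Real.exp L ≤ E := by
    rw [hE, ← Real.exp_add, Real.exp_le_exp]
    have : L ^ 20 * (1 - 1 / L ^ 10) = L ^ 20 - L ^ 10 := by field
    linarith
  have hpow : L ^ 10 ≤ L ^ 20 := pow_le_pow_right₀ (by linarith) (by norm_num)
  refine hbound.trans ?_
  rw [hright]
  calc _ = 2 * (C * L ^ 20 * (Real.exp 1 * E))
        + (2 * (L ^ 10 * (Real.exp 1 * E) / Real.exp L * (1 / L ^ 20 + 1 / L ^ 10))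
        + 8 * L ^ 10 * (Real.exp (L ^ 20 * (1 - 1 / L ^ 10)) * Real.exp L)) := by field
    _ ≤ 2 * (C * L ^ 20 * (Real.exp 1 * E))
        + (2 * (L ^ 20 * (Real.exp 1 * E) / 1 * (1 + 1)) + 8 * L ^ 20 * E) := by
      gcongr
      · exact Real.one_le_exp (by linarith)
      · linarith
    _ = (2 * C * Real.exp 1 + 4 * Real.exp 1 + 8) * L ^ 20 * E := by ring
    _ ≤ Real.exp (1 / 2 * L) * E := by gcongr
    _ = _ := by rw [hE, ← Real.exp_add]; ring_nf

lemma eventually_abs_smoothedDefect_le :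
    ∀ᶠ y : ℝ in atTop, |smoothedDefect y| ≤ Real.exp (y - y ^ (1 / 20 : ℝ) / 2) := by
  filter_upwards [(tendsto_rpow_atTop (by norm_num : (0 : ℝ) < 1 / 20)).eventually
    eventually_abs_smoothedDefect_pow_le, eventually_ge_atTop 0] with y hy hy0
  have hroot : (y ^ (1 / 20 : ℝ)) ^ 20 = y := by
    simpa using Real.rpow_inv_natCast_pow hy0 (n := 20) (by norm_num)
  rwa [hroot] at hy

end ContourShift

section PrimeGaps
open Filter Topology
open scoped ArithmeticFunction.vonMangoldt

lemma secondDifference_max_sub_zero {h : ℝ} (hh : 0 ≤ h) (x y : ℝ) :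
    max (y + h - x) 0 - 2 * max (y - x) 0 + max (y - h - x) 0 = max (h - |x - y|) 0 := by
  rcases abs_cases (x - y) with ⟨habs, hxy⟩ | ⟨habs, hxy⟩ <;> rw [habs]
  · rw [max_eq_right (by linarith : y - x ≤ 0), max_eq_right (by linarith : y - h - x ≤ 0)]
    ring_nf
  · rw [max_eq_left (by linarith : 0 ≤ y + h - x), max_eq_left (by linarith : 0 ≤ y - x)]
    rcases max_cases (y - h - x) 0 with ⟨hmax, hle⟩ | ⟨hmax, hlt⟩ <;> rw [hmax]
    · rw [max_eq_right (by linarith)]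
      ring
    · rw [max_eq_left (by linarith)]
      ring

lemma secondDifference_smoothedDefect {h : ℝ} (hh : 0 ≤ h) (y : ℝ) :
    smoothedDefect (y + h) - 2 * smoothedDefect y + smoothedDefect (y - h) =
      ∑ n ∈ Finset.Ioc 0 ⌊Real.exp (y + h)⌋₊, (Λ n - 1) * max (h - |Real.log n - y|) 0 := by
  have hsum := ((hasSum_smoothedDefect (y + h)).sub ((hasSum_smoothedDefect y).mul_left 2)).add
    (hasSum_smoothedDefect (y - h))
  have hterm (n : ℕ) : vonMangoldtDefect n * max (y + h - Real.log n) 0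
      - 2 * (vonMangoldtDefect n * max (y - Real.log n) 0)
      + vonMangoldtDefect n * max (y - h - Real.log n) 0 =
        vonMangoldtDefect n * max (h - |Real.log n - y|) 0 := by
    rw [← secondDifference_max_sub_zero hh]
    ring
  simp only [hterm] at hsum
  rw [← hsum.tsum_eq, tsum_eq_sum (s := Finset.Ioc 0 ⌊Real.exp (y + h)⌋₊)]
  · refine Finset.sum_congr rfl fun n hn ↦ ?_
    rw [vonMangoldtDefect, if_neg (Finset.mem_Ioc.mp hn).1.ne']
  · intro n hn
    rcases eq_or_ne n 0 with rfl | hn0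
    · simp [vonMangoldtDefect]
    · have hlt : Real.exp (y + h) < n :=
        Nat.lt_of_floor_lt (by rw [Finset.mem_Ioc] at hn; lia)
      have hlog : y + h < Real.log n :=
        (Real.lt_log_iff_exp_lt ((Real.exp_pos _).trans hlt)).mpr hlt
      rw [max_eq_right (by linarith [le_abs_self (Real.log n - y)]), mul_zero]

lemma sum_vonMangoldt_mul_le_of_forall_prime {h y : ℝ} (hh : 0 ≤ h) (hyh : 0 ≤ y + h)
    (hfar : ∀ q : ℕ, q.Prime → h ≤ |Real.log q - y|) :
    ∑ n ∈ Finset.Ioc 0 ⌊Real.exp (y + h)⌋₊, Λ n * max (h - |Real.log n - y|) 0 ≤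
      h * (2 * √(Real.exp (y + h)) * (y + h)) := by
  have hψθ := Chebyshev.psi_sub_theta_le (Real.one_le_exp hyh)
  rw [Chebyshev.psi_sub_theta_eq_sum_not_prime, Real.log_exp] at hψθ
  refine le_trans ?_ (mul_le_mul_of_nonneg_left hψθ hh)
  rw [Finset.sum_filter, Finset.mul_sum]
  refine Finset.sum_le_sum fun n _ ↦ ?_
  split_ifs with hn
  · rw [max_eq_right (by linarith [hfar n hn]), mul_zero, mul_zero]
  · rw [mul_comm]
    have : 0 ≤ Λ n := ArithmeticFunction.vonMangoldt_nonneg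
    gcongr
    exact max_le (by linarith [abs_nonneg (Real.log n - y)]) hh

lemma le_sum_max_sub_abs_log_sub {h : ℝ} (hh : 0 ≤ h) (y : ℝ) :
    h / 2 * (Real.exp y * (h / 2) - 1) ≤
      ∑ n ∈ Finset.Ioc 0 ⌊Real.exp (y + h)⌋₊, max (h - |Real.log n - y|) 0 := by
  have hsub : Finset.Ioc ⌊Real.exp y⌋₊ ⌊Real.exp (y + h / 2)⌋₊ ⊆
      Finset.Ioc 0 ⌊Real.exp (y + h)⌋₊ := by
    refine Finset.Ioc_subset_Ioc (Nat.zero_le _) (Nat.floor_mono (Real.exp_le_exp.mpr ?_))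
    linarith
  refine le_trans ?_ (Finset.sum_le_sum_of_subset_of_nonneg hsub fun _ _ _ ↦ le_max_right _ _)
  have hterm (n : ℕ) (hn : n ∈ Finset.Ioc ⌊Real.exp y⌋₊ ⌊Real.exp (y + h / 2)⌋₊) :
      h / 2 ≤ max (h - |Real.log n - y|) 0 := by
    rw [Finset.mem_Ioc] at hn
    have hlt : Real.exp y < n := Nat.lt_of_floor_lt hn.1
    have hle : (n : ℝ) ≤ Real.exp (y + h / 2) := (Nat.le_floor_iff (Real.exp_pos _).le).mp hn.2
    have hn0 : (0 : ℝ) < n := (Real.exp_pos _).trans hlt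
    refine le_max_of_le_left ?_
    rw [abs_of_pos (sub_pos.mpr ((Real.lt_log_iff_exp_lt hn0).mpr hlt))]
    linarith [(Real.log_le_iff_le_exp hn0).mpr hle]
  refine le_trans ?_ (Finset.card_nsmul_le_sum _ _ _ hterm)
  have hcard : Real.exp y * (h / 2) ≤ Real.exp (y + h / 2) - Real.exp y := by
    rw [Real.exp_add]
    nlinarith [Real.add_one_le_exp (h / 2), Real.exp_pos y]
  have hfloor : ⌊Real.exp y⌋₊ ≤ ⌊Real.exp (y + h / 2)⌋₊ :=
    Nat.floor_mono (Real.exp_le_exp.mpr (by linarith))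
  rw [Nat.card_Ioc, nsmul_eq_mul, Nat.cast_sub hfloor, mul_comm (h / 2)]
  refine mul_le_mul_of_nonneg_right ?_ (by linarith)
  linarith [Nat.lt_floor_add_one (Real.exp (y + h / 2)), Nat.floor_le (Real.exp_pos y).le]

lemma secondDifference_smoothedDefect_le {h y : ℝ} (hh : 0 ≤ h) (hyh : 0 ≤ y + h)
    (hfar : ∀ q : ℕ, q.Prime → h ≤ |Real.log q - y|) :
    smoothedDefect (y + h) - 2 * smoothedDefect y + smoothedDefect (y - h) ≤
      h * (2 * √(Real.exp (y + h)) * (y + h)) - h / 2 * (Real.exp y * (h / 2) - 1) := by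
  rw [secondDifference_smoothedDefect hh]
  simp only [sub_one_mul, Finset.sum_sub_distrib]
  exact sub_le_sub (sum_vonMangoldt_mul_le_of_forall_prime hh hyh hfar)
    (le_sum_max_sub_abs_log_sub hh y)

lemma eventually_abs_smoothedDefect_le_of_abs_sub_le_one :
    ∀ᶠ y : ℝ in atTop, ∀ z, |z - y| ≤ 1 →
      |smoothedDefect z| ≤ Real.exp (y + 1 - y ^ (1 / 20 : ℝ) / 4) := by
  obtain ⟨Y, hY⟩ := eventually_atTop.mp eventually_abs_smoothedDefect_le
  filter_upwards [eventually_ge_atTop (Y + 1), eventually_ge_atTop 2] with y hyY hy z hz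
  obtain ⟨hyz, hzy⟩ := abs_le.mp hz
  refine (hY z (by linarith)).trans (Real.exp_le_exp.mpr ?_)
  have hroot : y ^ (1 / 20 : ℝ) / 2 ≤ z ^ (1 / 20 : ℝ) := by
    have htwo : ((2 : ℝ) ^ 20) ^ (1 / 20 : ℝ) = 2 := by
      simpa using Real.pow_rpow_inv_natCast (zero_le_two (α := ℝ)) (n := 20) (by norm_num)
    calc _ = (y / 2 ^ 20) ^ (1 / 20 : ℝ) := by
          rw [Real.div_rpow (by linarith) (by positivity), htwo]
      _ ≤ _ := Real.rpow_le_rpow (by positivity) (by linarith) (by norm_num)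
  linarith

/-- The radius, on the logarithmic scale, of the neighbourhood of a large `y` in which some `log q`
with `q` prime is found. -/
noncomputable def logGap (y : ℝ) : ℝ := Real.exp (-(y ^ (1 / 20 : ℝ) / 16))

lemma logGap_pos (y : ℝ) : 0 < logGap y := Real.exp_pos _

lemma tendsto_logGap : Tendsto logGap atTop (𝓝 0) :=
  Real.tendsto_exp_neg_atTop_nhds_zero.comp
    ((tendsto_rpow_atTop (by norm_num : (0 : ℝ) < 1 / 20)).atTop_div_const (by norm_num))

lemma antitoneOn_logGap : AntitoneOn logGap (Set.Ici 0) := fun x hx y _ hxy ↦ by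
  have : x ^ (1 / 20 : ℝ) ≤ y ^ (1 / 20 : ℝ) := Real.rpow_le_rpow hx hxy (by norm_num)
  exact Real.exp_le_exp.mpr (by linarith)

lemma eventually_mul_le_logGap_mul_exp_half :
    ∀ᶠ y in atTop, 600 * y ≤ logGap y * Real.exp (y / 2) := by
  filter_upwards [eventually_const_mul_pow_le_exp 600 1 (by norm_num : (0 : ℝ) < 7 / 16),
    eventually_ge_atTop 1] with y hy hy1
  have hroot : y ^ (1 / 20 : ℝ) ≤ y := by
    simpa using Real.rpow_le_rpow_of_exponent_le hy1 (by norm_num : (1 / 20 : ℝ) ≤ 1)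
  rw [pow_one] at hy
  refine hy.trans ?_
  rw [logGap, ← Real.exp_add, Real.exp_le_exp]
  linarith

lemma lt_of_mul_le_mul_of_le_one_div {h x y : ℝ} (hh : 0 < h) (hh' : h ≤ 1 / 20) (hy : 1 ≤ y)
    (hxy : 600 * y ≤ h * x) :
    h * (12 * x * y) + 12 * h ^ 4 * x ^ 2 < h / 2 * (x ^ 2 * (h / 2) - 1) := by
  have hhx : 600 ≤ h * x := by linarith
  calc _ = 12 / 600 * (h * x) * (600 * y) + 12 * h ^ 2 * (h * x) ^ 2 := by ring
    _ ≤ 12 / 600 * (h * x) * (h * x) + 12 * (1 / 20) ^ 2 * (h * x) ^ 2 := by gcongr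
    _ < (h * x) ^ 2 / 4 - 1 / 2 := by nlinarith
    _ ≤ _ := by linarith

lemma eventually_exists_prime_abs_log_sub_lt :
    ∀ᶠ y in atTop, ∃ q : ℕ, q.Prime ∧ |Real.log q - y| < logGap y := by
  filter_upwards [eventually_abs_smoothedDefect_le_of_abs_sub_le_one, eventually_ge_atTop 1,
    eventually_mul_le_logGap_mul_exp_half,
    tendsto_logGap.eventually_le_const (by norm_num : (0 : ℝ) < 1 / 20)] with y hnear hy hexp hsmall
  by_contra! hfar
  have hh := logGap_pos y
  set h := logGap y with hh_def
  set x := Real.exp (y / 2) with hx_def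
  have hx : Real.exp y = x ^ 2 := by rw [hx_def, ← Real.exp_nat_mul]; congr 1; ring
  have he : Real.exp 1 ≤ 3 := by linarith [Real.exp_one_lt_d9]
  have hnear' {z : ℝ} (hz : |z - y| ≤ 1) : |smoothedDefect z| ≤ 3 * h ^ 4 * x ^ 2 := by
    refine (hnear z hz).trans ?_
    calc _ = Real.exp 1 * h ^ 4 * x ^ 2 := by
          rw [← hx, hh_def, logGap, ← Real.exp_nat_mul, ← Real.exp_add, ← Real.exp_add]
          congr 1
          push_cast
          ring
      _ ≤ _ := by gcongr
  have hsqrt : √(Real.exp (y + h)) ≤ 3 * x := by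
    rw [← Real.exp_half]
    calc Real.exp ((y + h) / 2) ≤ Real.exp (1 + y / 2) := Real.exp_le_exp.mpr (by linarith)
      _ ≤ 3 * x := by rw [Real.exp_add]; gcongr
  have hprimePowers : h * (2 * √(Real.exp (y + h)) * (y + h)) ≤ h * (12 * x * y) := by
    calc _ ≤ h * (2 * (3 * x) * (2 * y)) := by gcongr; linarith
      _ = _ := by ring
  have hdiff := secondDifference_smoothedDefect_le hh.le (by linarith) hfar
  have hright := hnear' (z := y + h) (by rw [add_sub_cancel_left, abs_of_pos hh]; linarith)
  have hmid := hnear' (z := y) (by simp)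
  have hleft := hnear' (z := y - h) (by rw [sub_sub_cancel_left, abs_neg, abs_of_pos hh]; linarith)
  rw [hx] at hdiff
  linarith [lt_of_mul_le_mul_of_le_one_div hh hsmall hy hexp, (abs_le.mp hright).1,
    (abs_le.mp hmid).2, (abs_le.mp hleft).1]

lemma eventually_exists_prime_mem_Ioo :
    ∀ᶠ X : ℝ in atTop, ∃ q : ℕ, q.Prime ∧
      (q : ℝ) ∈ Set.Ioo X (X * (1 + 4 * logGap (Real.log X))) := by
  obtain ⟨Y, hY⟩ := eventually_atTop.mp eventually_exists_prime_abs_log_sub_lt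
  have hsmall := tendsto_logGap.eventually_le_const (by norm_num : (0 : ℝ) < 1 / 2)
  filter_upwards [Real.tendsto_log_atTop.eventually (eventually_ge_atTop Y),
    Real.tendsto_log_atTop.eventually (eventually_ge_atTop 0),
    Real.tendsto_log_atTop.eventually hsmall, eventually_gt_atTop 0] with X hXY hX0 hXsmall hX
  set h := logGap (Real.log X)
  have hh : 0 < h := logGap_pos _
  obtain ⟨q, hq, hlog⟩ := hY (Real.log X + h) (by linarith)
  have hmono : logGap (Real.log X + h) ≤ h :=
    antitoneOn_logGap hX0 (Set.mem_Ici.mpr (by positivity)) (by linarith)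
  obtain ⟨hlower, hupper⟩ := abs_lt.mp (hlog.trans_le hmono)
  have hq0 : (0 : ℝ) < q := by exact_mod_cast hq.pos
  refine ⟨q, hq, (Real.log_lt_log_iff hX hq0).mp (by linarith), ?_⟩
  calc (q : ℝ) < X * Real.exp (2 * h) := by
        rw [← Real.log_lt_log_iff hq0 (by positivity), Real.log_mul hX.ne' (Real.exp_pos _).ne',
          Real.log_exp]
        linarith
    _ ≤ X * (1 + 4 * h) := by
        gcongr
        have hexp := Real.abs_exp_sub_one_le (x := 2 * h) (by rw [abs_of_pos] <;> linarith)
        rw [abs_of_pos (by linarith : 0 < 2 * h)] at hexp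
        linarith [le_abs_self (Real.exp (2 * h) - 1)]

end PrimeGaps

section PrimeChains
open Filter Set Topology

/-- The exponent `3 ^ k!` occurring in the definition of `Wpow`. -/
def millsExp (k : ℕ) : ℕ := 3 ^ k.factorial

lemma millsExp_succ (k : ℕ) : millsExp (k + 1) = millsExp k * millsExp k ^ k := by
  rw [← pow_succ', millsExp, millsExp, ← pow_mul, Nat.factorial_succ, mul_comm]

lemma three_le_millsExp (k : ℕ) : 3 ≤ millsExp k := Nat.le_self_pow k.factorial_ne_zero 3

lemma millsExp_ne_zero (k : ℕ) : millsExp k ≠ 0 := by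
  have := three_le_millsExp k
  lia

lemma millsExp_dvd_millsExp {j k : ℕ} (hjk : j ≤ k) : millsExp j ∣ millsExp k :=
  pow_dvd_pow 3 (Nat.factorial_le hjk)

lemma tendsto_millsExp : Tendsto millsExp atTop atTop :=
  tendsto_atTop_mono
    (fun k ↦ k.self_le_factorial.trans (Nat.lt_pow_self (by norm_num : 1 < 3)).le) tendsto_id

lemma tendsto_millsExp_cast : Tendsto (fun k ↦ (millsExp k : ℝ)) atTop atTop :=
  tendsto_natCast_atTop_atTop.comp tendsto_millsExp

/-- The relative error `exp (-(3 ^ k!) ^ R)`. The elements of `subL Wpow` are within this error of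
the `3 ^ k!`-th root of a prime, for every `R` and all large `k`. -/
noncomputable def relError (R k : ℕ) : ℝ := Real.exp (-(millsExp k : ℝ) ^ R)

lemma relError_pos (R k : ℕ) : 0 < relError R k := Real.exp_pos _

lemma relError_lt_one (R k : ℕ) : relError R k < 1 := by
  rw [relError, Real.exp_lt_one_iff, neg_lt_zero]
  exact pow_pos (Nat.cast_pos.mpr (millsExp_ne_zero k).bot_lt) R

lemma relError_le_relError {R S : ℕ} (hRS : R ≤ S) (k : ℕ) : relError S k ≤ relError R k := by
  have hone : (1 : ℝ) ≤ millsExp k := Nat.one_le_cast.mpr (millsExp_ne_zero k).bot_lt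
  exact Real.exp_le_exp.mpr (neg_le_neg (pow_le_pow_right₀ hone hRS))

lemma millsExp_pow_le_log_pow {R k q : ℕ} (hRk : R < k) (hq : 2 ≤ q) :
    (millsExp k : ℝ) ^ R ≤ Real.log ((q : ℝ) ^ millsExp k ^ k) := by
  have hN : (3 : ℝ) ≤ millsExp k := by exact_mod_cast three_le_millsExp k
  have hlog : 1 / 2 ≤ Real.log q := by
    have := Real.log_le_log two_pos (Nat.ofNat_le_cast.mpr hq : (2 : ℝ) ≤ q)
    linarith [Real.log_two_gt_d9]
  have hpow : (0 : ℝ) < (millsExp k : ℝ) ^ R := by positivity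
  rw [Real.log_pow]
  push_cast
  calc (millsExp k : ℝ) ^ R ≤ (millsExp k : ℝ) ^ (R + 1) * (1 / 2) := by
        rw [pow_succ]
        nlinarith
    _ ≤ (millsExp k : ℝ) ^ k * Real.log q := by
        gcongr
        · linarith
        · exact hRk

lemma eventually_logGap_log_pow_le (R : ℕ) :
    ∀ᶠ k in atTop, ∀ q : ℕ, 2 ≤ q →
      8 * logGap (Real.log ((q : ℝ) ^ millsExp k ^ k)) ≤ relError R k := by
  filter_upwards [tendsto_millsExp_cast.eventually (eventually_ge_atTop 64),
    eventually_gt_atTop (20 * (R + 1))] with k hN hk q hq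
  have hroot : (millsExp k : ℝ) ^ (R + 1) ≤
      Real.log ((q : ℝ) ^ millsExp k ^ k) ^ (1 / 20 : ℝ) := by
    have hlog := millsExp_pow_le_log_pow hk hq
    rw [mul_comm, pow_mul] at hlog
    calc _ = (((millsExp k : ℝ) ^ (R + 1)) ^ 20) ^ (1 / 20 : ℝ) := by
          simpa using (Real.pow_rpow_inv_natCast
            (by positivity : 0 ≤ (millsExp k : ℝ) ^ (R + 1)) (n := 20) (by norm_num)).symm
      _ ≤ _ := Real.rpow_le_rpow (by positivity) hlog (by norm_num)
  have height : (8 : ℝ) ≤ Real.exp 3 := by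
    calc (8 : ℝ) = 2 ^ 3 := by norm_num
      _ ≤ Real.exp 1 ^ 3 := by
        gcongr
        linarith [Real.exp_one_gt_d9]
      _ = Real.exp 3 := by rw [← Real.exp_nat_mul]; norm_num
  have hone : (1 : ℝ) ≤ (millsExp k : ℝ) ^ R := one_le_pow₀ (by linarith)
  calc _ ≤ Real.exp 3 * logGap (Real.log ((q : ℝ) ^ millsExp k ^ k)) := by
        gcongr
        exact (logGap_pos _).le
    _ ≤ relError R k := by
        rw [logGap, relError, ← Real.exp_add, Real.exp_le_exp]
        rw [pow_succ] at hroot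
        nlinarith

lemma eventually_two_le_pow_mul_relError (R : ℕ) :
    ∀ᶠ k in atTop, ∀ q : ℕ, 2 ≤ q → 2 ≤ (q : ℝ) ^ millsExp k ^ k * relError R k := by
  filter_upwards [eventually_gt_atTop (R + 1)] with k hk q hq
  have hN : (3 : ℝ) ≤ millsExp k := by exact_mod_cast three_le_millsExp k
  have hone : (1 : ℝ) ≤ (millsExp k : ℝ) ^ R := one_le_pow₀ (by linarith)
  have hlog := millsExp_pow_le_log_pow hk hq
  rw [pow_succ] at hlog
  rw [relError, ← Real.exp_log (by positivity : 0 < (q : ℝ) ^ millsExp k ^ k), ← Real.exp_add]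
  calc (2 : ℝ) ≤ 1 + 1 := by norm_num
    _ ≤ Real.exp 1 := Real.add_one_le_exp 1
    _ ≤ _ := Real.exp_le_exp.mpr (by nlinarith)

lemma eventually_exists_prime_add_one_lt (R : ℕ) :
    ∀ᶠ k in atTop, ∀ q : ℕ, 2 ≤ q → ∃ q' : ℕ, q'.Prime ∧ q ^ millsExp k ^ k < q' ∧
      (q' : ℝ) + 1 < (q : ℝ) ^ millsExp k ^ k * (1 + relError R k) := by
  obtain ⟨X₀, hX₀⟩ := eventually_atTop.mp eventually_exists_prime_mem_Ioo
  filter_upwards [eventually_logGap_log_pow_le R, eventually_two_le_pow_mul_relError R,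
    tendsto_millsExp_cast.eventually (eventually_ge_atTop X₀), eventually_gt_atTop 0]
    with k hgap htwo hNX hk q hq
  have hX : X₀ ≤ (q : ℝ) ^ millsExp k ^ k := by
    have hlt : millsExp k < q ^ millsExp k ^ k :=
      (Nat.le_self_pow hk.ne' _).trans_lt (Nat.lt_pow_self hq)
    exact hNX.trans (by exact_mod_cast hlt.le)
  obtain ⟨q', hq', hlower, hupper⟩ := hX₀ _ hX
  refine ⟨q', hq', by exact_mod_cast hlower, ?_⟩
  set X := (q : ℝ) ^ millsExp k ^ k
  calc (q' : ℝ) + 1 < X * (1 + 4 * logGap (Real.log X)) + X * (relError R k / 2) := by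
        linarith [htwo q hq]
    _ ≤ X * (1 + relError R k / 2) + X * (relError R k / 2) := by
        gcongr
        linarith [hgap q hq]
    _ = _ := by ring

lemma eventually_mul_relError_le_one (M : ℝ) (R : ℕ) :
    ∀ᶠ k in atTop, ∀ q : ℝ, q ≤ M ^ millsExp k → q * relError (R + 2) k ≤ 1 := by
  filter_upwards [tendsto_millsExp_cast.eventually (eventually_ge_atTop (Real.log |M|)),
    tendsto_millsExp_cast.eventually (eventually_ge_atTop 1)] with k hM hN q hq
  rw [relError, Real.exp_neg, ← div_eq_mul_inv, div_le_one (Real.exp_pos _)]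
  calc q ≤ |M| ^ millsExp k := hq.trans ((le_abs_self _).trans_eq (abs_pow M _))
    _ ≤ Real.exp (Real.log |M|) ^ millsExp k := by
        gcongr
        exact Real.le_exp_log _
    _ = Real.exp (millsExp k * Real.log |M|) := (Real.exp_nat_mul _ _).symm
    _ ≤ Real.exp ((millsExp k : ℝ) ^ 2) := by
        rw [sq]
        gcongr
    _ ≤ _ := by
        gcongr
        exact le_add_self

lemma eventually_exists_prime_add_one_lt_add_one_pow (M : ℝ) (R : ℕ) :
    ∀ᶠ k in atTop, ∀ q : ℕ, q.Prime → (q : ℝ) + 1 ≤ M ^ millsExp k →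
      ∃ q' : ℕ, q'.Prime ∧ q ^ millsExp k ^ k ≤ q' ∧ q' + 1 < (q + 1) ^ millsExp k ^ k ∧
        (q' : ℝ) + 1 < (q : ℝ) ^ millsExp k ^ k * (1 + relError R k) := by
  filter_upwards [eventually_exists_prime_add_one_lt (R + 2), eventually_mul_relError_le_one M R]
    with k hstep herr q hq hqM
  obtain ⟨q', hq', hlower, hupper⟩ := hstep q hq.two_le
  have hq0 : (0 : ℝ) < q := Nat.cast_pos.mpr hq.pos
  have hone : (1 : ℝ) ≤ (millsExp k ^ k : ℕ) :=
    Nat.one_le_cast.mpr (pow_pos (millsExp_ne_zero k).bot_lt k)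
  refine ⟨q', hq', hlower.le, ?_, hupper.trans_le ?_⟩
  · have hcast : (q' : ℝ) + 1 < ((q : ℝ) + 1) ^ millsExp k ^ k := by
      calc _ < (q : ℝ) ^ millsExp k ^ k * (1 + relError (R + 2) k) := hupper
        _ ≤ (q : ℝ) ^ millsExp k ^ k * (1 + (millsExp k ^ k : ℕ) * (1 / q)) := by
            gcongr
            rw [mul_one_div, le_div_iff₀ hq0]
            linarith [herr q (by linarith)]
        _ ≤ (q : ℝ) ^ millsExp k ^ k * (1 + 1 / q) ^ millsExp k ^ k := by
            gcongr
            exact one_add_mul_le_pow (by linarith [one_div_pos.mpr hq0]) _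
        _ = _ := by rw [← mul_pow, mul_one_add, mul_one_div_cancel hq0.ne']
    exact_mod_cast hcast
  · gcongr
    exact relError_le_relError le_self_add k

lemma exists_forall_pow_mem_Ico {n m Q : ℕ → ℕ} (hn : ∀ i, n i ≠ 0)
    (hnm : ∀ i, n (i + 1) = n i * m i) (hlower : ∀ i, Q i ^ m i ≤ Q (i + 1))
    (hupper : ∀ i, Q (i + 1) + 1 < (Q i + 1) ^ m i) :
    ∃ B : ℝ, 0 ≤ B ∧ ∀ i, B ^ n i ∈ Ico (Q i : ℝ) (Q i + 1) := by
  let x (i : ℕ) : ℝ := (Q i : ℝ) ^ (n i : ℝ)⁻¹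
  let z (i : ℕ) : ℝ := ((Q i : ℝ) + 1) ^ (n i : ℝ)⁻¹
  have hx0 (i : ℕ) : 0 ≤ x i := by positivity
  have hz0 (i : ℕ) : 0 ≤ z i := by positivity
  have hx (i : ℕ) : x i ^ n i = Q i := Real.rpow_inv_natCast_pow (by positivity) (hn i)
  have hz (i : ℕ) : z i ^ n i = Q i + 1 := Real.rpow_inv_natCast_pow (by positivity) (hn i)
  have hxmono : Monotone x := monotone_nat_of_le_succ fun i ↦ by
    rw [← pow_le_pow_iff_left₀ (hx0 _) (hx0 _) (hn (i + 1)), hx, hnm, pow_mul, hx]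
    exact_mod_cast hlower i
  have hzanti : StrictAnti z := strictAnti_nat_of_succ_lt fun i ↦ by
    rw [← pow_lt_pow_iff_left₀ (hz0 _) (hz0 _) (hn (i + 1)), hz, hnm, pow_mul, hz]
    exact_mod_cast hupper i
  have hxz (i j : ℕ) : x i ≤ z j := by
    calc x i ≤ x (max i j) := hxmono (le_max_left i j)
      _ ≤ z (max i j) := Real.rpow_le_rpow (by positivity) (by linarith) (by positivity)
      _ ≤ z j := hzanti.antitone (le_max_right i j)
  have hbdd : BddAbove (range x) := ⟨z 0, forall_mem_range.mpr fun i ↦ hxz i 0⟩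
  have hle (i : ℕ) : x i ≤ ⨆ j, x j := le_ciSup hbdd i
  have hlt (i : ℕ) : ⨆ j, x j < z i :=
    (ciSup_le fun j ↦ hxz j (i + 1)).trans_lt (hzanti i.lt_succ_self)
  have hB0 : 0 ≤ ⨆ j, x j := (hx0 0).trans (hle 0)
  refine ⟨⨆ j, x j, hB0, fun i ↦ ⟨?_, ?_⟩⟩
  · exact (hx i).ge.trans (pow_le_pow_left₀ (hx0 i) (hle i) _)
  · exact (pow_lt_pow_left₀ (hlt i) hB0 (hn i)).trans_eq (hz i)

lemma eventually_exists_prime_chain (M : ℝ) (R : ℕ) :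
    ∀ᶠ k in atTop, ∀ q : ℕ, q.Prime → (q : ℝ) + 1 ≤ M ^ millsExp k →
      ∃ Q : ℕ → ℕ, Q 0 = q ∧ ∀ i, (Q i).Prime ∧ Q i ^ millsExp (k + i) ^ (k + i) ≤ Q (i + 1) ∧
        Q (i + 1) + 1 < (Q i + 1) ^ millsExp (k + i) ^ (k + i) ∧
        (Q (i + 1) : ℝ) + 1 <
          (Q i : ℝ) ^ millsExp (k + i) ^ (k + i) * (1 + relError R (k + i)) := by
  have hstep := eventually_forall_ge_atTop.mpr (eventually_exists_prime_add_one_lt_add_one_pow M R)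
  filter_upwards [hstep] with k hstep q hq hqM
  have hnext (i : ℕ) (s : {q : ℕ // q.Prime ∧ (q : ℝ) + 1 ≤ M ^ millsExp (k + i)}) :
      ∃ s' : {q : ℕ // q.Prime ∧ (q : ℝ) + 1 ≤ M ^ millsExp (k + (i + 1))},
        s.1 ^ millsExp (k + i) ^ (k + i) ≤ s'.1 ∧
        s'.1 + 1 < (s.1 + 1) ^ millsExp (k + i) ^ (k + i) ∧
        (s'.1 : ℝ) + 1 <
          (s.1 : ℝ) ^ millsExp (k + i) ^ (k + i) * (1 + relError R (k + i)) := by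
    obtain ⟨q', hq', hlower, hupper, herr⟩ := hstep (k + i) le_self_add s.1 s.2.1 s.2.2
    refine ⟨⟨q', hq', ?_⟩, hlower, hupper, herr⟩
    calc (q' : ℝ) + 1 ≤ ((s.1 : ℝ) + 1) ^ millsExp (k + i) ^ (k + i) := by
          exact_mod_cast hupper.le
      _ ≤ (M ^ millsExp (k + i)) ^ millsExp (k + i) ^ (k + i) := by
          gcongr
          exact s.2.2
      _ = _ := by rw [← pow_mul, ← millsExp_succ, add_assoc]
  choose next hnext using hnext
  let s (i : ℕ) : {q : ℕ // q.Prime ∧ (q : ℝ) + 1 ≤ M ^ millsExp (k + i)} :=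
    Nat.rec ⟨q, hq, hqM⟩ next i
  exact ⟨fun i ↦ (s i).1, rfl, fun i ↦ ⟨(s i).2.1, hnext i (s i)⟩⟩

lemma eventually_exists_forall_prime_floor (M : ℝ) (R : ℕ) :
    ∀ᶠ k in atTop, ∀ q : ℕ, q.Prime → (q : ℝ) + 1 ≤ M ^ millsExp k →
      ∃ B : ℝ, 1 < B ∧ B ^ millsExp k ∈ Ico (q : ℝ) (q + 1) ∧
        (∀ j ≥ k, Prime ⌊B ^ millsExp j⌋) ∧
        B ^ millsExp (k + 1) < (q : ℝ) ^ millsExp k ^ k * (1 + relError R k) := by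
  filter_upwards [eventually_exists_prime_chain M R] with k hchain q hq hqM
  obtain ⟨Q, rfl, hQ⟩ := hchain q hq hqM
  obtain ⟨B, hB0, hB⟩ := exists_forall_pow_mem_Ico (n := fun i ↦ millsExp (k + i))
    (fun i ↦ millsExp_ne_zero _) (fun i ↦ millsExp_succ (k + i)) (fun i ↦ (hQ i).2.1)
    (fun i ↦ (hQ i).2.2.1)
  refine ⟨B, ?_, hB 0, fun j hj ↦ ?_, (hB 1).2.trans (hQ 0).2.2.2⟩
  · rw [← one_lt_pow_iff_of_nonneg hB0 (millsExp_ne_zero k)]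
    exact (Nat.one_lt_cast.mpr hq.one_lt).trans_le (hB 0).1
  · obtain ⟨i, rfl⟩ := Nat.exists_eq_add_of_le hj
    have hfloor : ⌊B ^ millsExp (k + i)⌋ = Q i := Int.floor_eq_iff.mpr (hB i)
    rw [hfloor]
    exact Nat.prime_iff_prime_int.mp (hQ i).1

end PrimeChains

section LeftSubBoundary
open Filter Set Topology

lemma floor_pow_le_floor_pow_of_dvd {a b : ℝ} (ha : 0 ≤ a) (hb : 0 ≤ b) {n n' : ℕ} (hn' : n' ≠ 0)
    (hdvd : n ∣ n') (hle : ⌊a ^ n'⌋ ≤ ⌊b ^ n'⌋) : ⌊a ^ n⌋ ≤ ⌊b ^ n⌋ := by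
  obtain ⟨c, rfl⟩ := hdvd
  rw [Int.le_floor]
  refine le_of_pow_le_pow_left₀ (right_ne_zero_of_mul hn') (pow_nonneg hb n) ?_
  rw [← pow_mul, ← Int.cast_pow, ← Int.le_floor]
  refine le_trans (Int.le_floor.mpr ?_) hle
  rw [Int.cast_pow, pow_mul]
  exact pow_le_pow_left₀ (Int.cast_nonneg (Int.floor_nonneg.mpr (pow_nonneg ha n)))
    (Int.floor_le _) c

lemma floor_pow_eq_floor_pow_of_dvd {a b : ℝ} (ha : 0 ≤ a) (hb : 0 ≤ b) {n n' : ℕ} (hn' : n' ≠ 0)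
    (hdvd : n ∣ n') (heq : ⌊a ^ n'⌋ = ⌊b ^ n'⌋) : ⌊a ^ n⌋ = ⌊b ^ n⌋ :=
  (floor_pow_le_floor_pow_of_dvd ha hb hn' hdvd heq.le).antisymm
    (floor_pow_le_floor_pow_of_dvd hb ha hn' hdvd heq.ge)

lemma eventually_floor_pow_eq {A : ℝ} (hA : 0 ≤ A) (n : ℕ) :
    ∀ᶠ B in 𝓝[≥] A, ⌊B ^ n⌋ = ⌊A ^ n⌋ := by
  have hlt : ∀ᶠ B : ℝ in 𝓝 A, B ^ n < ⌊A ^ n⌋ + 1 :=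
    (continuous_pow n).continuousAt.eventually_lt_const (Int.lt_floor_add_one _)
  filter_upwards [hlt.filter_mono nhdsWithin_le_nhds, self_mem_nhdsWithin] with B hB hAB
  exact Int.floor_eq_iff.mpr ⟨(Int.floor_le _).trans (pow_le_pow_left₀ hA hAB n), hB⟩

lemma compl_Wpow_mem_nhdsGE {A : ℝ} (hA : A ∉ Wpow) : Wpowᶜ ∈ 𝓝[≥] A := by
  rcases lt_or_ge A 1 with hlt | hge
  · filter_upwards [nhdsWithin_le_nhds (Iio_mem_nhds hlt)] with B hB hBW using hB.not_gt hBW.1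
  · obtain ⟨k, hk, hnot⟩ : ∃ k, 1 ≤ k ∧ ¬Prime ⌊A ^ 3 ^ k.factorial⌋ := by
      rcases hge.eq_or_lt with rfl | hgt
      · exact ⟨1, le_rfl, by simp⟩
      · by_contra! hprime
        exact hA ⟨hgt, hprime⟩
    filter_upwards [eventually_floor_pow_eq (zero_le_one.trans hge) (3 ^ k.factorial)]
      with B hB hBW
    exact hnot (hB ▸ hBW.2 k hk)

lemma mem_and_compl_mem_nhdsLT_of_mem_subL {X : Set ℝ} (hX : ∀ A ∉ X, Xᶜ ∈ 𝓝[≥] A) {A : ℝ}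
    (hA : A ∈ subL X) : A ∈ X ∧ Xᶜ ∈ 𝓝[<] A := by
  obtain ⟨_, ⟨x, hx, rfl⟩, hbdd, rfl⟩ := hA
  set U := connectedComponentIn Xᶜ x
  have hxU : x ∈ U := mem_connectedComponentIn hx
  have hUX : U ⊆ Xᶜ := connectedComponentIn_subset _ _
  have hIco : Ico x (sSup U) ⊆ U := fun z hz ↦ by
    obtain ⟨u, hu, hzu⟩ := exists_lt_of_lt_csSup ⟨x, hxU⟩ hz.2
    exact isPreconnected_connectedComponentIn.ordConnected.out hxU hu ⟨hz.1, hzu.le⟩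
  have hmem : sSup U ∈ X := by
    by_contra hnot
    obtain ⟨b, hb, hbX⟩ := mem_nhdsGE_iff_exists_Ico_subset.mp (hX _ hnot)
    have hsub : Ico x b ⊆ Xᶜ := fun z hz ↦ (lt_or_ge z (sSup U)).elim
      (fun hlt ↦ hUX (hIco ⟨hz.1, hlt⟩)) fun hge ↦ hbX ⟨hge, hz.2⟩
    have hxs : x ≤ sSup U := le_csSup hbdd hxU
    obtain ⟨c, hsc, hcb⟩ := exists_between (mem_Ioi.mp hb)
    have hcU : c ∈ U := isPreconnected_Ico.subset_connectedComponentIn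
      (left_mem_Ico.mpr (hxs.trans_lt hb)) hsub ⟨hxs.trans hsc.le, hcb⟩
    exact (le_csSup hbdd hcU).not_gt hsc
  have hxlt : x < sSup U :=
    (le_csSup hbdd hxU).lt_of_ne fun heq ↦ hx (heq ▸ hmem)
  exact ⟨hmem, mem_of_superset (Ico_mem_nhdsLT hxlt) (hIco.trans hUX)⟩

lemma pow_add_mul_sub_le_pow {x y : ℝ} (hx : 1 ≤ x) (hxy : x ≤ y) (n : ℕ) :
    x ^ n + n * (y - x) ≤ y ^ n := by
  induction n with
  | zero => simp
  | succ n ih =>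
    have hxn : 1 ≤ x ^ n := one_le_pow₀ hx
    have hsub : 0 ≤ (n : ℝ) * (y - x) := mul_nonneg n.cast_nonneg (sub_nonneg.mpr hxy)
    rw [pow_succ, pow_succ]
    push_cast
    nlinarith

lemma eventually_add_one_le_pow {x y : ℝ} (hx : 1 ≤ x) (hxy : x < y) :
    ∀ᶠ n : ℕ in atTop, x ^ n + 1 ≤ y ^ n := by
  filter_upwards [tendsto_natCast_atTop_atTop.eventually (eventually_ge_atTop (1 / (y - x)))]
    with n hn
  rw [div_le_iff₀ (sub_pos.mpr hxy)] at hn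
  linarith [pow_add_mul_sub_le_pow hx hxy.le n]

lemma eventually_exists_mem_Wpow {A : ℝ} (hA : A ∈ Wpow) (R : ℕ) :
    ∀ᶠ k in atTop, ∃ p : ℕ, p.Prime ∧ A ^ millsExp k ∈ Ico (p : ℝ) (p + 1) ∧
      ∃ B ∈ Wpow, B ^ millsExp k ∈ Ico (p : ℝ) (p + 1) ∧
        B ^ millsExp (k + 1) < (p : ℝ) ^ millsExp k ^ k * (1 + relError R k) := by
  filter_upwards [eventually_exists_forall_prime_floor (2 * A) R, eventually_ge_atTop 1]
    with k hchain hk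
  have hA0 : 0 ≤ A := zero_le_one.trans hA.1.le
  obtain ⟨p, hp⟩ := Int.eq_ofNat_of_zero_le (Int.floor_nonneg.mpr (pow_nonneg hA0 (millsExp k)))
  have hprime : p.Prime := Nat.prime_iff_prime_int.mpr (hp ▸ hA.2 k hk)
  have hAp : A ^ millsExp k ∈ Ico (p : ℝ) (p + 1) := Int.floor_eq_iff.mp hp
  have hpM : (p : ℝ) + 1 ≤ (2 * A) ^ millsExp k := by
    rw [mul_pow]
    nlinarith [hAp.1, one_le_pow₀ hA.1.le (n := millsExp k),
      le_self_pow₀ one_le_two (millsExp_ne_zero k) (M₀ := ℝ)]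
  obtain ⟨B, hB, hBp, hBprime, hBlt⟩ := hchain p hprime hpM
  refine ⟨p, hprime, hAp, B, ⟨hB, fun j hj ↦ ?_⟩, hBp, hBlt⟩
  rcases le_total k j with hkj | hjk
  · exact hBprime j hkj
  · have hfloor : ⌊B ^ millsExp j⌋ = ⌊A ^ millsExp j⌋ :=
      floor_pow_eq_floor_pow_of_dvd (zero_le_one.trans hB.le) hA0 (millsExp_ne_zero k)
        (millsExp_dvd_millsExp hjk) ((Int.floor_eq_iff.mpr hBp).trans hp.symm)
    exact hfloor ▸ hA.2 j hj

lemma le_mul_one_add_of_pow_lt {α B e : ℝ} {n m : ℕ} (hα : 0 ≤ α) (he : 0 ≤ e) (hn : n * m ≠ 0)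
    (hlt : B ^ (n * m) < (α ^ n) ^ m * (1 + e)) : B ≤ α * (1 + e) := by
  refine le_of_pow_le_pow_left₀ hn (by positivity) (hlt.le.trans ?_)
  rw [mul_pow, pow_mul]
  gcongr
  exact le_self_pow₀ (by linarith) hn

/-- Competing elements `B` of `Wpow` with `⌊B ^ millsExp k⌋ = p` cannot lie strictly between the
component and its supremum `A`, which forces `A ≤ B`. -/
lemma eventually_exists_prime_root_mem_Icc {A : ℝ} (hA : A ∈ subL Wpow) (R : ℕ) :
    ∀ᶠ k in atTop, ∃ p : ℕ, p.Prime ∧ A ^ millsExp k < p + 1 ∧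
      ∃ α ∈ Icc (A * (1 - relError R k)) A, α ^ millsExp k = p := by
  obtain ⟨hAW, hgap⟩ := mem_and_compl_mem_nhdsLT_of_mem_subL (fun _ ↦ compl_Wpow_mem_nhdsGE) hA
  obtain ⟨x, hxA, hx⟩ := mem_nhdsLT_iff_exists_Ioo_subset.mp hgap
  have hA1 : 1 < A := hAW.1
  filter_upwards [eventually_exists_mem_Wpow hAW R, tendsto_millsExp.eventually
    (eventually_add_one_le_pow (le_max_right x 1) (max_lt hxA hA1))]
    with k ⟨p, hp, hAp, B, hBW, hBp, hBlt⟩ hpow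
  obtain ⟨α, hα0, hα⟩ : ∃ α : ℝ, 0 ≤ α ∧ α ^ millsExp k = p :=
    ⟨(p : ℝ) ^ (millsExp k : ℝ)⁻¹, by positivity,
      Real.rpow_inv_natCast_pow p.cast_nonneg (millsExp_ne_zero k)⟩
  have hxB : x < B := by
    refine (le_max_left x 1).trans_lt (lt_of_pow_lt_pow_left₀ (millsExp k) ?_ ?_)
    · linarith [hBW.1]
    · linarith [hAp.2, hBp.1]
  have hAB : A ≤ B := not_lt.mp fun hlt ↦ hx ⟨hxB, hlt⟩ hBW
  have hBα : B ≤ α * (1 + relError R k) := by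
    rw [millsExp_succ, ← hα] at hBlt
    refine le_mul_one_add_of_pow_lt hα0 (relError_pos R k).le ?_ hBlt
    rw [← millsExp_succ]
    exact millsExp_ne_zero _
  have hαA : α ≤ A :=
    le_of_pow_le_pow_left₀ (millsExp_ne_zero k) (by linarith) (hα.trans_le hAp.1)
  exact ⟨p, hp, hAp.2, α, ⟨by nlinarith [relError_pos R k], hαA⟩, hα⟩

end LeftSubBoundary

section Radicals

open Polynomial

section Trace

variable {γ : ℝ} {n : ℕ} {c : ℚ}

lemma norm_eq_of_aeval_minpoly_eq_zero (hγ : 0 < γ) (hn : n ≠ 0) (hpow : γ ^ n = c) {z : ℂ}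
    (hz : aeval z (minpoly ℚ γ) = 0) : ‖z‖ = γ := by
  have hdvd : minpoly ℚ γ ∣ X ^ n - C c := minpoly.dvd ℚ γ (by simp [hpow])
  have hzn : z ^ n = c := by
    simpa [sub_eq_zero] using aeval_eq_zero_of_dvd_aeval_eq_zero hdvd hz
  rw [← pow_left_inj₀ (norm_nonneg z) hγ.le hn, ← norm_pow, hzn, hpow, Complex.norm_ratCast,
    abs_of_pos (hpow ▸ pow_pos hγ n)]

lemma isIntegral_of_pow_eq_ratCast (hn : n ≠ 0) (hpow : γ ^ n = c) : IsIntegral ℚ γ :=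
  .of_pow hn.bot_lt (hpow ▸ isIntegral_algebraMap)

lemma abs_coeff_zero_minpoly_eq_pow (hγ : 0 < γ) (hn : n ≠ 0) (hpow : γ ^ n = c) :
    |((minpoly ℚ γ).coeff 0 : ℝ)| = γ ^ (minpoly ℚ γ).natDegree := by
  set F := (minpoly ℚ γ).map (algebraMap ℚ ℂ) with hF
  have hsplits : F.Splits := IsAlgClosed.splits F
  have hmonic : F.Monic := (minpoly.monic (isIntegral_of_pow_eq_ratCast hn hpow)).map _
  have hroots : ∀ z ∈ F.roots, ‖z‖ = γ := fun z hz ↦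
    norm_eq_of_aeval_minpoly_eq_zero hγ hn hpow <| by
      simpa [hF, eval_map_algebraMap] using (mem_roots'.mp hz).2
  calc |((minpoly ℚ γ).coeff 0 : ℝ)| = ‖F.coeff 0‖ := by simp [hF, Complex.norm_ratCast]
    _ = ‖F.roots.prod‖ := by
        rw [hsplits.coeff_zero_eq_prod_roots_of_monic hmonic, norm_mul, norm_pow, norm_neg,
          norm_one, one_pow, one_mul]
    _ = (F.roots.map (‖·‖)).prod := map_multiset_prod (normHom (α := ℂ)) F.roots
    _ = γ ^ (minpoly ℚ γ).natDegree := by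
        rw [Multiset.map_congr rfl hroots, Multiset.map_const', Multiset.prod_replicate,
          ← hsplits.natDegree_eq_card_roots, hF, natDegree_map]

lemma minpoly_eq_X_pow_sub_C (hγ : 0 < γ) (hn : n ≠ 0) (hpow : γ ^ n = c) :
    minpoly ℚ γ = X ^ (minpoly ℚ γ).natDegree - C |(minpoly ℚ γ).coeff 0| := by
  have hint := isIntegral_of_pow_eq_ratCast hn hpow
  have hdeg := minpoly.natDegree_pos hint
  refine (minpoly.unique ℚ γ (monic_X_pow_sub_C _ hdeg.ne') ?_ fun q hq hroot ↦ ?_).symm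
  · simp [← abs_coeff_zero_minpoly_eq_pow hγ hn hpow]
  · rw [degree_X_pow_sub_C hdeg, ← degree_eq_natDegree (minpoly.ne_zero hint)]
    exact minpoly.min ℚ γ hq hroot

lemma nextCoeff_minpoly_eq_zero (hγ : 0 < γ) (hn : n ≠ 0) (hpow : γ ^ n = c)
    (hirr : Irrational γ) : (minpoly ℚ γ).nextCoeff = 0 := by
  have hint := isIntegral_of_pow_eq_ratCast hn hpow
  have hdeg : 2 ≤ (minpoly ℚ γ).natDegree := by
    rw [minpoly.two_le_natDegree_iff hint]
    exact hirr
  rw [nextCoeff_of_natDegree_pos (by lia), minpoly_eq_X_pow_sub_C hγ hn hpow,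
    natDegree_X_pow_sub_C, coeff_sub, coeff_X_pow, coeff_C, if_neg (by lia), if_neg (by lia),
    sub_zero]

lemma trace_eq_zero_of_pow_eq_ratCast {K : Type*} [Field K] [Algebra ℚ K] [FiniteDimensional ℚ K]
    (φ : K →ₐ[ℚ] ℝ) {x : K} (hx : 0 < φ x) (hn : n ≠ 0) (hpow : φ x ^ n = c)
    (hirr : Irrational (φ x)) : Algebra.trace ℚ K x = 0 := by
  rw [trace_eq_finrank_mul_minpoly_nextCoeff, ← minpoly.algHom_eq φ φ.injective x,
    nextCoeff_minpoly_eq_zero hx hn hpow hirr, neg_zero, mul_zero]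

end Trace

section PrimeRadicals

variable {ι : Type*} [Fintype ι] {n : ℕ} {p : ι → ℕ}

lemma padicValRat_prod {ι : Type*} {q : ℕ} [Fact q.Prime] (s : Finset ι) {f : ι → ℚ}
    (hf : ∀ i ∈ s, f i ≠ 0) :
    padicValRat q (∏ i ∈ s, f i) = ∑ i ∈ s, padicValRat q (f i) := by
  induction s using Finset.cons_induction with
  | empty => simp
  | cons i s hi ih =>
    simp only [Finset.mem_cons, forall_eq_or_imp] at hf
    rw [Finset.prod_cons, Finset.sum_cons,
      padicValRat.mul hf.1 (Finset.prod_ne_zero_iff.mpr hf.2), ih hf.2]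

lemma padicValRat_prod_zpow (hp : ∀ i, (p i).Prime) (hinj : p.Injective) (d : ι → ℤ) (j : ι) :
    padicValRat (p j) (∏ i, (p i : ℚ) ^ d i) = d j := by
  have : Fact (p j).Prime := ⟨hp j⟩
  have hp0 (i : ι) : (p i : ℚ) ≠ 0 := Nat.cast_ne_zero.mpr (hp i).ne_zero
  rw [padicValRat_prod _ fun i _ ↦ zpow_ne_zero _ (hp0 i),
    Finset.sum_eq_single_of_mem j (Finset.mem_univ j)]
  · rw [padicValRat.zpow, padicValRat.self (hp j).one_lt, mul_one]
  · intro i _ hij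
    have : Fact (p i).Prime := ⟨hp i⟩
    rw [padicValRat.zpow, padicValRat.of_nat, padicValNat_primes (hinj.ne hij.symm), Nat.cast_zero,
      mul_zero]

lemma prod_zpow_pow_eq {K : Type*} [Field K] [CharZero K] {a : ι → K}
    (hpow : ∀ i, a i ^ n = p i) (d : ι → ℤ) :
    (∏ i, a i ^ d i) ^ n = ((∏ i, (p i : ℚ) ^ d i : ℚ) : K) := by
  push_cast
  rw [← Finset.prod_pow]
  refine Finset.prod_congr rfl fun i _ ↦ ?_
  rw [← hpow, ← zpow_natCast, ← zpow_natCast, zpow_comm]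

lemma irrational_prod_zpow (hp : ∀ i, (p i).Prime) (hinj : p.Injective) {α : ι → ℝ}
    (hpow : ∀ i, α i ^ n = p i) {d : ι → ℤ} (hd : d ≠ 0) (hdn : ∀ i, |d i| < n) :
    Irrational (∏ i, α i ^ d i) := by
  rintro ⟨q, hq⟩
  have hqn : q ^ n = ∏ i, (p i : ℚ) ^ d i := by
    have hpow' := prod_zpow_pow_eq hpow d
    rw [← hq] at hpow'
    exact_mod_cast hpow'
  refine hd (funext fun j ↦ Int.eq_zero_of_abs_lt_dvd ?_ (hdn j))
  have : Fact (p j).Prime := ⟨hp j⟩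
  rw [← padicValRat_prod_zpow hp hinj d j, ← hqn, padicValRat.pow]
  exact dvd_mul_right _ _

section NumberField

variable {K : Type*} [Field K] [Algebra ℚ K] [FiniteDimensional ℚ K] (φ : K →ₐ[ℚ] ℝ) {a : ι → K}

lemma trace_prod_zpow_eq_zero (hp : ∀ i, (p i).Prime) (hinj : p.Injective)
    (ha : ∀ i, 0 < φ (a i)) (hpow : ∀ i, a i ^ n = p i) {d : ι → ℤ} (hd : d ≠ 0)
    (hdn : ∀ i, |d i| < n) : Algebra.trace ℚ K (∏ i, a i ^ d i) = 0 := by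
  have hφpow (i : ι) : φ (a i) ^ n = p i := by rw [← map_pow, hpow, map_natCast]
  have hφ : φ (∏ i, a i ^ d i) = ∏ i, φ (a i) ^ d i := by simp only [map_prod, map_zpow₀]
  have hn : n ≠ 0 := by
    obtain ⟨j, -⟩ := Function.ne_iff.mp hd
    have := hdn j
    have := abs_nonneg (d j)
    lia
  refine trace_eq_zero_of_pow_eq_ratCast φ ?_ hn (hφ ▸ prod_zpow_pow_eq hφpow d)
    (hφ ▸ irrational_prod_zpow hp hinj hφpow hd hdn)
  exact hφ ▸ Finset.prod_pos fun i _ ↦ zpow_pos (ha i) _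

lemma trace_aeval_mul_prod_zpow (hp : ∀ i, (p i).Prime)
    (hinj : p.Injective) (ha : ∀ i, 0 < φ (a i)) (hpow : ∀ i, a i ^ n = p i)
    {P : MvPolynomial ι ℤ} (hdeg : ∀ m ∈ P.support, ∀ i, m i < n) {b : ι →₀ ℕ}
    (hb : b ∈ P.support) :
    Algebra.trace ℚ K (MvPolynomial.aeval a P * ∏ i, a i ^ (-(b i : ℤ))) =
      (P.coeff b : ℤ) * Module.finrank ℚ K := by
  have ha0 (i : ι) : a i ≠ 0 := fun h ↦ (ha i).ne' (by rw [h, map_zero])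
  have hterm (m : ι →₀ ℕ) : algebraMap ℤ K (P.coeff m) * (∏ i, a i ^ m i) *
      ∏ i, a i ^ (-(b i : ℤ)) = ((P.coeff m : ℤ) : ℚ) • ∏ i, a i ^ ((m i : ℤ) - b i) := by
    rw [mul_assoc, ← Finset.prod_mul_distrib, Algebra.smul_def, map_intCast, eq_intCast]
    simp only [sub_eq_add_neg, zpow_add₀ (ha0 _), zpow_natCast]
  rw [MvPolynomial.aeval_def, MvPolynomial.eval₂_eq', Finset.sum_mul, map_sum,
    Finset.sum_eq_single_of_mem b hb]
  · have htrace := Algebra.trace_algebraMap (R := ℚ) (S := K) 1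
    simp only [map_one, nsmul_eq_mul, mul_one] at htrace
    simp only [hterm, sub_self, zpow_zero, Finset.prod_const_one, map_smul, htrace, smul_eq_mul]
  · intro m hm hmb
    have hd : (fun i ↦ (m i : ℤ) - b i) ≠ 0 := fun h ↦
      hmb (Finsupp.ext fun i ↦ by simpa [sub_eq_zero] using congrFun h i)
    have hdn (i : ι) : |(m i : ℤ) - b i| < n := by
      have := hdeg m hm i
      have := hdeg b hb i
      rw [abs_lt]
      lia
    rw [hterm, map_smul, trace_prod_zpow_eq_zero φ hp hinj ha hpow hd hdn, smul_zero]

end NumberField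

end PrimeRadicals

lemma aeval_ne_zero_of_pow_eq_prime {ι K : Type*} [Finite ι] [Field K] [Algebra ℚ K]
    [FiniteDimensional ℚ K] (φ : K →ₐ[ℚ] ℝ) {n : ℕ} {p : ι → ℕ} (hp : ∀ i, (p i).Prime)
    (hinj : p.Injective) {a : ι → K} (ha : ∀ i, 0 < φ (a i)) (hpow : ∀ i, a i ^ n = p i)
    {P : MvPolynomial ι ℤ} (hP : P ≠ 0) (hdeg : ∀ m ∈ P.support, ∀ i, m i < n) :
    MvPolynomial.aeval a P ≠ 0 := by
  have := Fintype.ofFinite ι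
  obtain ⟨b, hb⟩ := MvPolynomial.support_nonempty.mpr hP
  intro h
  have htrace := trace_aeval_mul_prod_zpow φ hp hinj ha hpow hdeg hb
  rw [h, zero_mul, map_zero, eq_comm, mul_eq_zero, Int.cast_eq_zero, Nat.cast_eq_zero] at htrace
  exact htrace.elim (MvPolynomial.mem_support_iff.mp hb) Module.finrank_pos.ne'

end Radicals

section Liouville

open Polynomial

lemma card_algHom_adjoin_le_pow_card {F E L ι : Type*} [Field F] [Field E] [Field L] [Algebra F E]
    [Algebra F L] [Fintype ι] {α : ι → E}
    [Fintype (IntermediateField.adjoin F (Set.range α) →ₐ[F] L)] {n : ℕ} (hn : n ≠ 0) {c : ι → F}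
    (hpow : ∀ i, α i ^ n = algebraMap F E (c i)) :
    Fintype.card (IntermediateField.adjoin F (Set.range α) →ₐ[F] L) ≤ n ^ Fintype.card ι := by
  classical
  let a (i : ι) : IntermediateField.adjoin F (Set.range α) :=
    ⟨α i, IntermediateField.subset_adjoin F _ ⟨i, rfl⟩⟩
  have hapow (i : ι) : a i ^ n = algebraMap F _ (c i) := Subtype.ext (hpow i)
  let roots (i : ι) : Finset L := (nthRoots n (algebraMap F L (c i))).toFinset
  calc Fintype.card (IntermediateField.adjoin F (Set.range α) →ₐ[F] L)
      ≤ (Fintype.piFinset roots).card := by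
        refine Finset.card_le_card_of_injOn (fun σ i ↦ σ (a i)) (fun σ _ ↦ ?_) fun σ _ τ _ h ↦ ?_
        · simp only [roots, Finset.mem_coe, Fintype.mem_piFinset, Multiset.mem_toFinset,
            mem_nthRoots hn.bot_lt, ← map_pow, hapow, AlgHom.commutes, implies_true]
        · refine IntermediateField.adjoin_algHom_ext F ?_
          rintro _ ⟨i, rfl⟩
          exact congrFun h i
    _ = ∏ i, (roots i).card := Fintype.card_piFinset roots
    _ ≤ ∏ _i : ι, n :=
        Finset.prod_le_prod' fun i _ ↦ (Multiset.toFinset_card_le _).trans (card_nthRoots _ _)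
    _ = n ^ Fintype.card ι := by rw [Finset.prod_const, Finset.card_univ]

section NumberField

variable {K : Type*} [Field K] [Algebra ℚ K] [FiniteDimensional ℚ K] {β : K}

lemma one_le_prod_norm_of_isIntegral (hβ : IsIntegral ℤ β) (hβ0 : β ≠ 0) :
    1 ≤ ∏ σ : K →ₐ[ℚ] ℂ, ‖σ β‖ := by
  obtain ⟨z, hz⟩ := IsIntegrallyClosed.isIntegral_iff.mp (Algebra.isIntegral_norm ℚ hβ)
  have hz0 : z ≠ 0 := by
    rintro rfl
    exact hβ0 (Algebra.norm_eq_zero_iff.mp (hz.symm.trans (map_zero _)))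
  rw [← norm_prod, ← Algebra.norm_eq_prod_embeddings ℚ ℂ β, ← hz, eq_intCast, eq_ratCast,
    Rat.cast_intCast, Complex.norm_intCast]
  exact_mod_cast Int.one_le_abs hz0

lemma one_le_norm_mul_pow_card (hβ : IsIntegral ℤ β) (hβ0 : β ≠ 0) {C : ℝ} (hC1 : 1 ≤ C)
    (hC : ∀ σ : K →ₐ[ℚ] ℂ, ‖σ β‖ ≤ C) (φ : K →ₐ[ℚ] ℂ) :
    1 ≤ ‖φ β‖ * C ^ Fintype.card (K →ₐ[ℚ] ℂ) := by
  classical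
  calc 1 ≤ ‖φ β‖ * ∏ σ ∈ Finset.univ.erase φ, ‖σ β‖ :=
        (one_le_prod_norm_of_isIntegral hβ hβ0).trans_eq
          (Finset.mul_prod_erase _ _ (Finset.mem_univ φ)).symm
    _ ≤ ‖φ β‖ * C ^ (Finset.univ.erase φ).card := by
        gcongr
        exact (Finset.prod_le_prod (fun σ _ ↦ norm_nonneg _) fun σ _ ↦ hC σ).trans_eq
          (Finset.prod_const C)
    _ ≤ ‖φ β‖ * C ^ Fintype.card (K →ₐ[ℚ] ℂ) := by
        gcongr
        exact Finset.card_le_univ _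

end NumberField

variable {ι : Type*} [Fintype ι] {P : MvPolynomial ι ℤ}

/-- The value at `x` of the polynomial obtained from `P` by replacing its coefficients by their
absolute values: for `x ≥ 0` it bounds `P` on the polydisc of radii `x`. -/
noncomputable def absEval (P : MvPolynomial ι ℤ) (x : ι → ℝ) : ℝ :=
  ∑ m ∈ P.support, |((P.coeff m : ℤ) : ℝ)| * ∏ i, x i ^ m i

lemma absEval_nonneg {x : ι → ℝ} (hx : ∀ i, 0 ≤ x i) : 0 ≤ absEval P x :=
  Finset.sum_nonneg fun _ _ ↦
    mul_nonneg (abs_nonneg _) (Finset.prod_nonneg fun i _ ↦ pow_nonneg (hx i) _)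

lemma absEval_le_absEval {x y : ι → ℝ} (hx : ∀ i, 0 ≤ x i) (hxy : ∀ i, x i ≤ y i) :
    absEval P x ≤ absEval P y := by
  unfold absEval
  gcongr with m _ i
  exacts [fun i _ ↦ pow_nonneg (hx i) _, hx i, hxy i]

lemma norm_aeval_le_absEval (v : ι → ℂ) : ‖MvPolynomial.aeval v P‖ ≤ absEval P (‖v ·‖) := by
  rw [MvPolynomial.aeval_def, MvPolynomial.eval₂_eq']
  refine (norm_sum_le _ _).trans_eq (Finset.sum_congr rfl fun m _ ↦ ?_)
  simp only [eq_intCast, norm_mul, norm_prod, norm_pow, Complex.norm_intCast]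

lemma isIntegral_aeval {R σ A : Type*} [CommRing R] [CommRing A] [Algebra R A] {x : σ → A}
    (hx : ∀ i, IsIntegral R (x i)) (P : MvPolynomial σ R) :
    IsIntegral R (MvPolynomial.aeval x P) := by
  let x' (i : σ) : integralClosure R A := ⟨x i, hx i⟩
  rw [show MvPolynomial.aeval x P = MvPolynomial.aeval x' P from
    (integralClosure R A).mvPolynomial_aeval_coe x' P]
  exact (MvPolynomial.aeval x' P).2

lemma isIntegral_of_pow_eq_natCast {R A : Type*} [CommRing R] [CommRing A] [Algebra R A] {x : A}
    {n m : ℕ} (hn : n ≠ 0) (h : x ^ n = m) : IsIntegral R x :=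
  .of_pow hn.bot_lt (h ▸ isIntegral_natCast m)

lemma one_le_abs_aeval_mul_absEval_pow (hP : P ≠ 0) {n : ℕ} (hn : n ≠ 0)
    (hdeg : ∀ m ∈ P.support, ∀ i, m i < n) {p : ι → ℕ} (hp : ∀ i, (p i).Prime)
    (hinj : p.Injective) {α : ι → ℝ} (hα : ∀ i, 0 < α i) (hpow : ∀ i, α i ^ n = p i)
    {C : ℝ} (hC1 : 1 ≤ C) (hC : absEval P α ≤ C) :
    1 ≤ |MvPolynomial.aeval α P| * C ^ n ^ Fintype.card ι := by
  let K := IntermediateField.adjoin ℚ (Set.range α)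
  let a (i : ι) : K := ⟨α i, IntermediateField.subset_adjoin ℚ _ ⟨i, rfl⟩⟩
  let φ : K →ₐ[ℚ] ℂ := (Complex.ofRealAm.restrictScalars ℚ).comp K.val
  have : FiniteDimensional ℚ K := by
    apply IntermediateField.finiteDimensional_adjoin
    rintro _ ⟨i, rfl⟩
    exact isIntegral_of_pow_eq_natCast hn (hpow i)
  have hapow (i : ι) : a i ^ n = p i := Subtype.ext (by simpa [a] using hpow i)
  have hint (i : ι) : IsIntegral ℤ (a i) := isIntegral_of_pow_eq_natCast hn (hapow i)
  have hnorm (σ : K →ₐ[ℚ] ℂ) (i : ι) : ‖σ (a i)‖ = α i := by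
    rw [← pow_left_inj₀ (norm_nonneg _) (hα i).le hn, ← norm_pow, ← map_pow, hapow, map_natCast,
      Complex.norm_natCast, hpow]
  have hbound (σ : K →ₐ[ℚ] ℂ) : ‖σ (MvPolynomial.aeval a P)‖ ≤ C := by
    have hle := norm_aeval_le_absEval (P := P) fun i ↦ σ (a i)
    simp only [hnorm] at hle
    exact (MvPolynomial.comp_aeval_apply a (σ.restrictScalars ℤ) P).symm ▸ hle.trans hC
  have hφ : ‖φ (MvPolynomial.aeval a P)‖ = |MvPolynomial.aeval α P| := by
    have hα : K.val (MvPolynomial.aeval a P) = MvPolynomial.aeval α P :=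
      MvPolynomial.comp_aeval_apply a (K.val.restrictScalars ℤ) P
    rw [← hα, ← Real.norm_eq_abs, ← Complex.norm_real]
    rfl
  calc 1 ≤ ‖φ (MvPolynomial.aeval a P)‖ * C ^ Fintype.card (K →ₐ[ℚ] ℂ) :=
        one_le_norm_mul_pow_card (isIntegral_aeval hint P)
          (aeval_ne_zero_of_pow_eq_prime K.val hp hinj hα hapow hP hdeg) hC1 hbound φ
    _ ≤ |MvPolynomial.aeval α P| * C ^ n ^ Fintype.card ι := by
        rw [hφ]
        gcongr
        exact card_algHom_adjoin_le_pow_card hn (c := fun i ↦ (p i : ℚ)) (by simpa using hpow)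

end Liouville

section Main

open Filter Set

section Approximation

variable {ι : Type*} [Fintype ι] {A α : ι → ℝ} {ε : ℝ}

lemma abs_prod_pow_sub_prod_pow_le (hε1 : ε ≤ 1) (hA : ∀ i, 0 ≤ A i)
    (hα : ∀ i, α i ∈ Icc (A i * (1 - ε)) (A i)) (m : ι →₀ ℕ) :
    |(∏ i, α i ^ m i) - ∏ i, A i ^ m i| ≤ (∏ i, A i ^ m i) * (m.degree * ε) := by
  have hα0 (i : ι) : 0 ≤ α i := (mul_nonneg (hA i) (by linarith)).trans (hα i).1
  have hupper : ∏ i, α i ^ m i ≤ ∏ i, A i ^ m i := by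
    gcongr with i
    exacts [fun i _ ↦ pow_nonneg (hα0 i) _, hα0 i, (hα i).2]
  have hlower : (∏ i, A i ^ m i) * (1 - ε) ^ m.degree ≤ ∏ i, α i ^ m i := by
    rw [Finsupp.degree_eq_sum, ← Finset.prod_pow_eq_pow_sum, ← Finset.prod_mul_distrib]
    gcongr with i
    · exact fun i _ ↦ mul_nonneg (pow_nonneg (hA i) _) (pow_nonneg (by linarith) _)
    · rw [← mul_pow]
      exact pow_le_pow_left₀ (mul_nonneg (hA i) (by linarith)) (hα i).1 _
  have hbernoulli : 1 - m.degree * ε ≤ (1 - ε) ^ m.degree := by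
    have := one_add_mul_le_pow (a := -ε) (by linarith) m.degree
    rwa [mul_neg, ← sub_eq_add_neg, ← sub_eq_add_neg] at this
  have := mul_le_mul_of_nonneg_left hbernoulli
    (Finset.prod_nonneg fun i _ ↦ pow_nonneg (hA i) (m i) : 0 ≤ ∏ i, A i ^ m i)
  rw [abs_sub_comm, abs_of_nonneg (sub_nonneg.mpr hupper)]
  linarith

lemma abs_aeval_sub_aeval_le (hε0 : 0 ≤ ε) (hε1 : ε ≤ 1) (hA : ∀ i, 0 ≤ A i)
    (hα : ∀ i, α i ∈ Icc (A i * (1 - ε)) (A i)) (P : MvPolynomial ι ℤ) :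
    |MvPolynomial.aeval α P - MvPolynomial.aeval A P| ≤ absEval P A * (P.totalDegree * ε) := by
  simp only [MvPolynomial.aeval_def, MvPolynomial.eval₂_eq', eq_intCast, absEval]
  rw [← Finset.sum_sub_distrib, Finset.sum_mul]
  refine (Finset.abs_sum_le_sum_abs _ _).trans (Finset.sum_le_sum fun m hm ↦ ?_)
  rw [← mul_sub, abs_mul, mul_assoc]
  gcongr
  refine (abs_prod_pow_sub_prod_pow_le hε1 hA hα m).trans ?_
  gcongr
  · exact Finset.prod_nonneg fun i _ ↦ pow_nonneg (hA i) _
  · exact MvPolynomial.le_totalDegree hm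

lemma one_le_of_aeval_eq_zero {P : MvPolynomial ι ℤ} (hP : P ≠ 0)
    (hPA : MvPolynomial.aeval A P = 0) (hA : ∀ i, 0 ≤ A i) (hε0 : 0 ≤ ε) (hε1 : ε < 1) {n : ℕ}
    (hn : P.totalDegree < n) {p : ι → ℕ} (hp : ∀ i, (p i).Prime) (hinj : p.Injective)
    (hα : ∀ i, α i ∈ Icc (A i * (1 - ε)) (A i)) (hpow : ∀ i, α i ^ n = p i) :
    1 ≤ absEval P A * (P.totalDegree * ε) * (1 + absEval P A) ^ n ^ Fintype.card ι := by
  have hn0 : n ≠ 0 := hn.ne_bot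
  have hα0 (i : ι) : 0 < α i := by
    refine ((mul_nonneg (hA i) (by linarith)).trans (hα i).1).lt_of_ne' fun h ↦ (hp i).ne_zero ?_
    have := hpow i
    rw [h, zero_pow hn0] at this
    exact_mod_cast this.symm
  have hdeg (m) (hm : m ∈ P.support) (i : ι) : m i < n :=
    (m.le_degree i).trans_lt <| (MvPolynomial.le_totalDegree hm).trans_lt hn
  have habs : absEval P α ≤ 1 + absEval P A := by
    linarith [absEval_le_absEval (P := P) (fun i ↦ (hα0 i).le) fun i ↦ (hα i).2]
  have hupper := abs_aeval_sub_aeval_le hε0 hε1.le hA hα P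
  rw [hPA, sub_zero] at hupper
  have hA0 := absEval_nonneg (P := P) hA
  calc 1 ≤ |MvPolynomial.aeval α P| * (1 + absEval P A) ^ n ^ Fintype.card ι :=
        one_le_abs_aeval_mul_absEval_pow hP hn0 hdeg hp hinj hα0 hpow (by linarith) habs
    _ ≤ _ := by gcongr

end Approximation

lemma mul_exp_neg_pow_mul_pow_lt_one {B : ℝ} (hB : 0 ≤ B) {n : ℕ} (hn : 2 * B < n) (r : ℕ) :
    B * Real.exp (-(n : ℝ) ^ (r + 1)) * B ^ n ^ r < 1 := by
  have hBexp : B ≤ Real.exp B := by linarith [Real.add_one_le_exp B]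
  have hone : (1 : ℝ) ≤ n := by
    have : (0 : ℝ) < n := by linarith
    exact_mod_cast this
  calc B * Real.exp (-(n : ℝ) ^ (r + 1)) * B ^ n ^ r
      ≤ Real.exp B * Real.exp (-(n : ℝ) ^ (r + 1)) * Real.exp B ^ n ^ r := by gcongr
    _ = Real.exp (B * (1 + (n : ℝ) ^ r) - (n : ℝ) ^ (r + 1)) := by
        rw [← Real.exp_nat_mul, ← Real.exp_add, ← Real.exp_add]
        push_cast
        ring_nf
    _ < 1 := by
        rw [Real.exp_lt_one_iff, pow_succ]
        nlinarith [one_le_pow₀ hone (n := r)]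

lemma eventually_injective_prime {ι : Type*} [Finite ι] {A : ι → ℝ} (hinj : A.Injective)
    (hA : ∀ i, 1 ≤ A i) :
    ∀ᶠ n : ℕ in atTop, ∀ p : ι → ℕ, (∀ i, (p i : ℝ) ≤ A i ^ n ∧ A i ^ n < p i + 1) →
      p.Injective := by
  have hsep : ∀ᶠ n : ℕ in atTop, ∀ i j, A i < A j → A i ^ n + 1 ≤ A j ^ n := by
    simp only [eventually_all]
    exact fun i j hij ↦ eventually_add_one_le_pow (hA i) hij
  filter_upwards [hsep] with n hsep p hp i j hij
  have hp' (i j : ι) (h : A i < A j) : p i < p j := by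
    have : (p i : ℝ) < p j := by linarith [hsep i j h, (hp i).1, (hp j).2]
    exact_mod_cast this
  exact hinj <| le_antisymm (not_lt.mp fun h ↦ (hp' j i h).ne' hij)
    (not_lt.mp fun h ↦ (hp' i j h).ne hij)

lemma algebraicIndependent_int_of_mem_subL_Wpow {ι : Type*} [Finite ι] {A : ι → ℝ}
    (hinj : A.Injective) (hA : ∀ i, A i ∈ subL Wpow) : AlgebraicIndependent ℤ A := by
  have := Fintype.ofFinite ι
  rw [algebraicIndependent_iff]
  intro P hPA
  by_contra hP
  have hA1 (i : ι) : 1 ≤ A i :=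
    (mem_and_compl_mem_nhdsLT_of_mem_subL (fun _ ↦ compl_Wpow_mem_nhdsGE) (hA i)).1.1.le
  have hPA0 := absEval_nonneg (P := P) fun i ↦ zero_le_one.trans (hA1 i)
  let B : ℝ := (1 + absEval P A) * (P.totalDegree + 1)
  have hroots := eventually_all.mpr fun i ↦
    eventually_exists_prime_root_mem_Icc (hA i) (Fintype.card ι + 1)
  obtain ⟨k, hroots, hpinj, hdeg, hB⟩ := (hroots.and <|
    (tendsto_millsExp.eventually (eventually_injective_prime hinj hA1)).and <|
    (tendsto_millsExp.eventually (eventually_gt_atTop P.totalDegree)).and <|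
    tendsto_millsExp_cast.eventually (eventually_gt_atTop (2 * B))).exists
  choose p hp hlt α hα hpow using hroots
  have hle (i : ι) : (p i : ℝ) ≤ A i ^ millsExp k := by
    rw [← hpow i]
    refine pow_le_pow_left₀ ?_ (hα i).2 _
    exact (mul_nonneg (zero_le_one.trans (hA1 i))
      (sub_nonneg.mpr (relError_lt_one _ k).le)).trans (hα i).1
  have hone := one_le_of_aeval_eq_zero hP hPA (fun i ↦ zero_le_one.trans (hA1 i))
    (relError_pos _ k).le (relError_lt_one _ k) hdeg hp (hpinj p fun i ↦ ⟨hle i, hlt i⟩) hα hpow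
  refine hone.not_gt (lt_of_le_of_lt ?_ (mul_exp_neg_pow_mul_pow_lt_one (B := B) (by positivity)
    hB (Fintype.card ι)))
  rw [← mul_assoc, ← relError]
  have := relError_pos (Fintype.card ι + 1) k
  gcongr <;> simp only [B] <;> nlinarith

end Main

end PrimeRepresenting

theorem algebraicIndependent_subL_Wpow_general :
    AlgebraicIndependent ℚ ((↑) : subL Wpow → ℝ) := by
  have : Algebra.IsAlgebraic ℤ ℚ := IsLocalization.isAlgebraic ℚ (nonZeroDivisors ℤ)
  refine algebraicIndependent_of_finite_type fun t ht ↦ ?_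
  have := ht.to_subtype
  exact (PrimeRepresenting.algebraicIndependent_int_of_mem_subL_Wpow
    (Subtype.val_injective.comp Subtype.val_injective) fun i ↦ i.1.2).extendScalars ℚ

/-- Every (nonempty finite) family of distinct elements of the left sub-boundary of
`Wpow` is algebraically independent over `ℚ`. -/
theorem algebraicIndependent_subL_Wpow
    (r : ℕ) (hr : 0 < r) (A : Fin r → ℝ) (hinj : Function.Injective A)
    (hA : ∀ i : Fin r, A i ∈ subL Wpow) :
    AlgebraicIndependent ℚ A :=
  algebraicIndependent_subL_Wpow_general.comp (fun i ↦ ⟨A i, hA i⟩)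
    fun _ _ h ↦ hinj (congrArg Subtype.val h)
end

section
/- Let D ≥ 2 be an integer and let p_1, …, p_r be prime numbers with p_1 + 1 < p_2 < ⋯ < p_r. Then the field extension ℚ(p_1^{1/D}) of ℚ has degree D, and for every j with 2 ≤ j ≤ r, the degree of ℚ(p_1^{1/D}, …, p_j^{1/D}) over ℚ(p_1^{1/D}, …, p_{j−1}^{1/D}) equals D, where p^{1/D} denotes the positive real D-th root of p. -/
/-!
Let `K` be a field of real numbers and call `x > 0` a radical over `K` if some power `x ^ n`,
`n ≠ 0`, lies in `K`. All complex conjugates of `x` over `K` have absolute value `x`, so the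
constant term of its minimal polynomial, of degree `d` say, is `± x ^ d`; as `x ^ d` is then in `K`,
the minimal polynomial is `X ^ d - x ^ d`. Hence a radical outside `K` has trace zero.

Suppose a radical `x` is a `K`-linear combination of radicals `t`. Dividing by `x` and taking traces
shows that some `t / x` lies in `K`. Therefore a radical in `K(S)`, with `S` a set of radicals, is
an element of `K` times a product of elements of `S`. Over `ℚ`, a valuation at which the product
contributes only multiples of `D` then shows that no smaller power of the new root than the `D`-th
lies in the field generated by the previous ones.
-/

open Polynomial IntermediateField

section RealRadicals

variable (K : Type*) [Field K] [Algebra K ℝ]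

/-- The positive real radicals over a field `K` of real numbers: the `x > 0` such that `x ^ n`
lies in `K` for some `n ≠ 0`. The exponent may vary with `x`; the radicals still form a submonoid
of `ℝ`. -/
def posRadicals : Submonoid ℝ where
  carrier := {x | 0 < x ∧ ∃ n ≠ 0, x ^ n ∈ (algebraMap K ℝ).range}
  one_mem' := ⟨one_pos, 1, one_ne_zero, by simp⟩
  mul_mem' := by
    rintro x y ⟨hx, m, hm, hxm⟩ ⟨hy, n, hn, hyn⟩
    refine ⟨mul_pos hx hy, m * n, mul_ne_zero hm hn, ?_⟩
    rw [mul_pow, pow_mul, mul_comm m n, pow_mul]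
    exact mul_mem (pow_mem hxm n) (pow_mem hyn m)

variable {K} {x : ℝ}

theorem inv_mem_posRadicals (hx : x ∈ posRadicals K) : x⁻¹ ∈ posRadicals K := by
  obtain ⟨hpos, n, hn, c, hc⟩ := hx
  exact ⟨inv_pos.2 hpos, n, hn, c⁻¹, by rw [map_inv₀, hc, inv_pow]⟩

theorem isIntegral_of_mem_posRadicals (hx : x ∈ posRadicals K) : IsIntegral K x := by
  obtain ⟨-, n, hn, c, hc⟩ := hx
  exact .of_pow (Nat.pos_of_ne_zero hn) (hc ▸ isIntegral_algebraMap)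

theorem norm_eq_of_mem_aroots_minpoly (hx : x ∈ posRadicals K) {z : ℂ}
    (hz : z ∈ (minpoly K x).aroots ℂ) : ‖z‖ = x := by
  obtain ⟨hpos, n, hn, c, hc⟩ := hx
  have hdvd : minpoly K x ∣ X ^ n - C c := minpoly.dvd K x (by simp [hc])
  have hzn : z ^ n = (x ^ n : ℝ) := by
    have : aeval z (X ^ n - C c) = 0 := aeval_eq_zero_of_dvd_aeval_eq_zero hdvd (mem_aroots.1 hz).2
    rw [← hc, ← Complex.coe_algebraMap, ← IsScalarTower.algebraMap_apply]
    simpa [sub_eq_zero] using this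
  refine (pow_left_inj₀ (norm_nonneg z) hpos.le hn).1 ?_
  rw [← norm_pow, hzn, Complex.norm_of_nonneg (by positivity)]

theorem norm_coeff_zero_minpoly (hx : x ∈ posRadicals K) :
    ‖algebraMap K ℝ ((minpoly K x).coeff 0)‖ = x ^ (minpoly K x).natDegree := by
  have hmonic := (minpoly.monic (isIntegral_of_mem_posRadicals hx)).map (algebraMap K ℂ)
  have hsplits := IsAlgClosed.splits ((minpoly K x).map (algebraMap K ℂ))
  calc ‖algebraMap K ℝ ((minpoly K x).coeff 0)‖
      = ‖((minpoly K x).map (algebraMap K ℂ)).coeff 0‖ := by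
        rw [coeff_map, IsScalarTower.algebraMap_apply K ℝ ℂ, norm_algebraMap']
    _ = ‖((minpoly K x).aroots ℂ).prod‖ := by
        rw [hsplits.coeff_zero_eq_prod_roots_of_monic hmonic]
        simp [aroots]
    _ = (((minpoly K x).aroots ℂ).map norm).prod :=
        (Multiset.prod_hom _ (normHom : ℂ →*₀ ℝ)).symm
    _ = x ^ (minpoly K x).natDegree := by
        rw [Multiset.map_congr rfl fun z hz ↦ norm_eq_of_mem_aroots_minpoly hx hz,
          Multiset.map_const', Multiset.prod_replicate, aroots, ← hsplits.natDegree_eq_card_roots,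
          natDegree_map]

theorem pow_natDegree_minpoly_mem_range (hx : x ∈ posRadicals K) :
    x ^ (minpoly K x).natDegree ∈ (algebraMap K ℝ).range := by
  rw [← norm_coeff_zero_minpoly hx, Real.norm_eq_abs]
  rcases abs_choice (algebraMap K ℝ ((minpoly K x).coeff 0)) with h | h <;> rw [h]
  · exact ⟨_, rfl⟩
  · exact neg_mem ⟨_, rfl⟩

theorem exists_minpoly_eq_X_pow_sub_C (hx : x ∈ posRadicals K) :
    ∃ c : K, minpoly K x = X ^ (minpoly K x).natDegree - C c := by
  have hint := isIntegral_of_mem_posRadicals hx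
  have hdeg : (minpoly K x).natDegree ≠ 0 := (minpoly.natDegree_pos hint).ne'
  obtain ⟨c, hc⟩ := pow_natDegree_minpoly_mem_range hx
  refine ⟨c, (eq_of_monic_of_dvd_of_natDegree_le (minpoly.monic hint)
    (monic_X_pow_sub_C c hdeg) (minpoly.dvd K x ?_) ?_).symm⟩
  · simp [hc]
  · rw [natDegree_X_pow_sub_C]

theorem nextCoeff_minpoly_eq_zero (hx : x ∈ posRadicals K) (hxK : x ∉ (algebraMap K ℝ).range) :
    (minpoly K x).nextCoeff = 0 := by
  have hint := isIntegral_of_mem_posRadicals hx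
  have hdeg : 2 ≤ (minpoly K x).natDegree := (minpoly.two_le_natDegree_iff hint).2 hxK
  obtain ⟨c, hc⟩ := exists_minpoly_eq_X_pow_sub_C hx
  rw [nextCoeff_of_natDegree_pos (by lia), hc, natDegree_X_pow_sub_C, coeff_sub, coeff_X_pow,
    coeff_C, if_neg (by lia), if_neg (by lia), sub_zero]

theorem normalizedTrace_eq_zero_of_mem_posRadicals {L : IntermediateField K ℝ} [CharZero K]
    [Algebra.IsIntegral K L] {y : L} (hy : (y : ℝ) ∈ posRadicals K)
    (hyK : (y : ℝ) ∉ (algebraMap K ℝ).range) : Algebra.normalizedTrace K L y = 0 := by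
  have hminpoly : minpoly K y = minpoly K (y : ℝ) :=
    (minpoly.algebraMap_eq (algebraMap L ℝ).injective y).symm
  rw [Algebra.normalizedTrace_minpoly, hminpoly, nextCoeff_minpoly_eq_zero hy hyK, neg_zero,
    smul_zero]

theorem exists_smul_eq_of_mem_span {T : Set ℝ} (hT : T ⊆ posRadicals K) (hx : x ∈ posRadicals K)
    (hxT : x ∈ Submodule.span K T) : ∃ t ∈ T, ∃ c : K, x = c • t := by
  have : CharZero K := (algebraMap K ℝ).charZero
  let L := algebraicClosure K ℝ
  have hL {y : ℝ} (hy : y ∈ posRadicals K) : y ∈ L :=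
    mem_algebraicClosure_iff'.2 (isIntegral_of_mem_posRadicals hy)
  let x' : L := ⟨x, hL hx⟩
  have hx0 : x' ≠ 0 := fun h ↦ hx.1.ne' (congrArg Subtype.val h)
  let φ : L →ₗ[K] K := Algebra.normalizedTrace K L ∘ₗ LinearMap.mulRight K x'⁻¹
  by_contra! hne
  have hker : Submodule.span K T ≤ (LinearMap.ker φ).map L.val.toLinearMap := by
    refine Submodule.span_le.2 fun t ht ↦ ⟨⟨t, hL (hT ht)⟩, ?_, rfl⟩
    have hratio : t * x⁻¹ ∉ (algebraMap K ℝ).range := by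
      rintro ⟨c, hc⟩
      refine hne t ht c⁻¹ ?_
      have ht0 : t ≠ 0 := (hT ht).1.ne'
      have hx0 : x ≠ 0 := hx.1.ne'
      rw [Algebra.smul_def, map_inv₀, hc]
      field_simp
    exact normalizedTrace_eq_zero_of_mem_posRadicals
      (mul_mem (hT ht) (inv_mem_posRadicals hx)) hratio
  obtain ⟨y, hy, hyx⟩ := hker hxT
  obtain rfl : y = x' := Subtype.ext hyx
  have hone : φ x' = 1 := by
    have := Algebra.normalizedTrace_algebraMap_apply K K L 1
    simpa [φ, hx0] using this
  exact one_ne_zero (hone.symm.trans hy)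

theorem exists_smul_eq_of_mem_adjoin {S : Set ℝ} (hS : S ⊆ posRadicals K)
    (hx : x ∈ posRadicals K) (hxS : x ∈ adjoin K S) :
    ∃ t ∈ Submonoid.closure S, ∃ c : K, x = c • t := by
  refine exists_smul_eq_of_mem_span (Submonoid.closure_le.2 hS) hx ?_
  rwa [← Algebra.adjoin_eq_span, Subalgebra.mem_toSubmodule, ← adjoin_toSubalgebra_of_isAlgebraic
    fun s hs ↦ (isIntegral_of_mem_posRadicals (hS hs)).isAlgebraic]

theorem finrank_adjoin_simple_of_forall_dvd (hx : 0 < x) {n : ℕ} (hn : n ≠ 0)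
    (hxn : x ^ n ∈ (algebraMap K ℝ).range)
    (hdvd : ∀ m, x ^ m ∈ (algebraMap K ℝ).range → n ∣ m) : Module.finrank K K⟮x⟯ = n := by
  have hrad : x ∈ posRadicals K := ⟨hx, n, hn, hxn⟩
  have hint := isIntegral_of_mem_posRadicals hrad
  obtain ⟨c, hc⟩ := hxn
  rw [adjoin.finrank hint]
  refine le_antisymm ?_ (Nat.le_of_dvd (minpoly.natDegree_pos hint)
    (hdvd _ (pow_natDegree_minpoly_mem_range hrad)))
  rw [← natDegree_X_pow_sub_C (n := n) (r := c)]
  exact natDegree_le_of_dvd (minpoly.dvd K x (by simp [hc])) (X_pow_sub_C_ne_zero (by lia) c)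

theorem finrank_adjoin_adjoin_simple_of_forall_dvd {S : Set ℝ} (hS : S ⊆ posRadicals K)
    (hx : 0 < x) {n : ℕ} (hn : n ≠ 0) (hxn : x ^ n ∈ (algebraMap K ℝ).range)
    (hdvd : ∀ m, ∀ t ∈ Submonoid.closure S, ∀ c : K, x ^ m = c • t → n ∣ m) :
    Module.finrank (adjoin K S) (adjoin K S)⟮x⟯ = n := by
  obtain ⟨c, hc⟩ := hxn
  refine finrank_adjoin_simple_of_forall_dvd hx hn ⟨algebraMap K _ c, hc⟩ ?_
  rintro m ⟨y, hy⟩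
  have hxm : x ^ m ∈ adjoin K S := hy ▸ y.2
  have hrad : x ∈ posRadicals K := ⟨hx, n, hn, c, hc⟩
  obtain ⟨t, ht, d, htd⟩ := exists_smul_eq_of_mem_adjoin hS (pow_mem hrad m) hxm
  exact hdvd m t ht d htd

end RealRadicals

theorem relfinrank_adjoin_insert {K E : Type*} [Field K] [Field E] [Algebra K E] (S : Set E)
    (x : E) : relfinrank (adjoin K S) (adjoin K (insert x S)) =
      Module.finrank (adjoin K S) (adjoin K S)⟮x⟯ := by
  have hle : adjoin K S ≤ adjoin K (insert x S) := adjoin.mono K _ _ (Set.subset_insert x S)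
  have hext : extendScalars hle = (adjoin K S)⟮x⟯ := by
    apply restrictScalars_injective K
    rw [extendScalars_restrictScalars, adjoin_adjoin_left, Set.union_singleton]
  rw [relfinrank_eq_finrank_of_le hle, hext]

section Valuation

variable {ℓ D : ℕ} [Fact ℓ.Prime] {S : Set ℝ}

theorem exists_pow_eq_ratCast_of_mem_closure
    (hS : ∀ s ∈ S, ∃ a : ℚ, a ≠ 0 ∧ s ^ D = a ∧ (D : ℤ) ∣ padicValRat ℓ a) {t : ℝ}
    (ht : t ∈ Submonoid.closure S) : ∃ a : ℚ, a ≠ 0 ∧ t ^ D = a ∧ (D : ℤ) ∣ padicValRat ℓ a := by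
  induction ht using Submonoid.closure_induction with
  | mem s hs => exact hS s hs
  | one => exact ⟨1, one_ne_zero, by simp, by simp⟩
  | mul s t _ _ ihs iht =>
    obtain ⟨a, ha, hsa, hva⟩ := ihs
    obtain ⟨b, hb, htb, hvb⟩ := iht
    refine ⟨a * b, mul_ne_zero ha hb, by rw [mul_pow, hsa, htb, Rat.cast_mul], ?_⟩
    rw [padicValRat.mul ha hb]
    exact dvd_add hva hvb

theorem finrank_adjoin_adjoin_simple_of_isCoprime_padicValRat (hD : D ≠ 0)
    (hS : ∀ s ∈ S, 0 < s ∧ ∃ a : ℚ, s ^ D = a ∧ (D : ℤ) ∣ padicValRat ℓ a)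
    {x : ℝ} (hx : 0 < x) {b : ℚ} (hxb : x ^ D = b) (hb : IsCoprime (D : ℤ) (padicValRat ℓ b)) :
    Module.finrank (adjoin ℚ S) (adjoin ℚ S)⟮x⟯ = D := by
  have hSrad : S ⊆ posRadicals ℚ := fun s hs ↦
    let ⟨hs0, a, hsa, _⟩ := hS s hs
    ⟨hs0, D, hD, a, hsa.symm⟩
  have hSval (s : ℝ) (hs : s ∈ S) : ∃ a : ℚ, a ≠ 0 ∧ s ^ D = a ∧ (D : ℤ) ∣ padicValRat ℓ a := by
    obtain ⟨hs0, a, hsa, hva⟩ := hS s hs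
    have ha : (a : ℝ) ≠ 0 := hsa ▸ (pow_pos hs0 D).ne'
    exact ⟨a, Rat.cast_ne_zero.1 ha, hsa, hva⟩
  refine finrank_adjoin_adjoin_simple_of_forall_dvd hSrad hx hD ⟨b, hxb.symm⟩ ?_
  intro m t ht c hxm
  obtain ⟨a, ha, hta, hva⟩ := exists_pow_eq_ratCast_of_mem_closure hSval ht
  have hc : c ≠ 0 := by
    rintro rfl
    exact (pow_pos hx m).ne' (by rw [hxm, zero_smul])
  have hpow : b ^ m = c ^ D * a := by
    have : (b : ℝ) ^ m = c ^ D * a := by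
      rw [← hxb, ← hta, ← mul_pow, ← pow_mul, mul_comm D m, pow_mul, hxm, Rat.smul_def]
    exact_mod_cast this
  have hval : m * padicValRat ℓ b = D * padicValRat ℓ c + padicValRat ℓ a := by
    rw [← padicValRat.pow, hpow, padicValRat.mul (pow_ne_zero D hc) ha, padicValRat.pow]
  have : (D : ℤ) ∣ m * padicValRat ℓ b := hval ▸ dvd_add (dvd_mul_right _ _) hva
  exact_mod_cast hb.dvd_of_dvd_mul_right this

theorem relfinrank_adjoin_image_rpow_insert (hD : D ≠ 0) {T : Set ℕ}
    (hT : ∀ a ∈ T, a ≠ 0 ∧ D ∣ padicValNat ℓ a) {b : ℕ} (hb : b ≠ 0)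
    (hbD : D.Coprime (padicValNat ℓ b)) :
    relfinrank (adjoin ℚ ((fun a : ℕ ↦ (a : ℝ) ^ ((1 : ℝ) / (D : ℝ))) '' T))
      (adjoin ℚ ((fun a : ℕ ↦ (a : ℝ) ^ ((1 : ℝ) / (D : ℝ))) '' insert b T)) = D := by
  have hpos {a : ℕ} (ha : a ≠ 0) : 0 < (a : ℝ) ^ ((1 : ℝ) / (D : ℝ)) := by positivity
  have hpow (a : ℕ) : ((a : ℝ) ^ ((1 : ℝ) / (D : ℝ))) ^ D = ((a : ℚ) : ℝ) := by
    rw [one_div, Real.rpow_inv_natCast_pow a.cast_nonneg hD, Rat.cast_natCast]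
  rw [Set.image_insert_eq, relfinrank_adjoin_insert]
  refine finrank_adjoin_adjoin_simple_of_isCoprime_padicValRat (ℓ := ℓ) hD
    (Set.forall_mem_image.2 fun a ha ↦ ⟨hpos (hT a ha).1, a, hpow a, ?_⟩)
    (hpos hb) (hpow b) ?_
  · rw [padicValRat.of_nat]
    exact_mod_cast (hT a ha).2
  · rw [padicValRat.of_nat]
    exact Nat.isCoprime_iff_coprime.2 hbD

end Valuation

theorem exists_prime_coprime_padicValNat_of_injOn {D r : ℕ} {p : ℕ → ℕ}
    (hp : ∀ j, 1 ≤ j → j ≤ r → (p j).Prime) (hinj : Set.InjOn p (Set.Icc 1 r)) (j : ℕ) (h1 : 1 ≤ j)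
    (hj : j ≤ r) : ∃ ℓ : ℕ, ℓ.Prime ∧ D.Coprime (padicValNat ℓ (p j)) ∧
      ∀ i, 1 ≤ i → i < j → D ∣ padicValNat ℓ (p i) := by
  have := Fact.mk (hp j h1 hj)
  refine ⟨p j, hp j h1 hj, by simp [padicValNat_self], fun i hi hij ↦ ?_⟩
  have := Fact.mk (hp i hi (hij.le.trans hj))
  have hne : p j ≠ p i := hinj.ne ⟨h1, hj⟩ ⟨hi, hij.le.trans hj⟩ hij.ne'
  rw [padicValNat_primes hne]
  exact dvd_zero D

theorem strictMonoOn_Icc_one_of_lt_add_one {α : Type*} [Preorder α] {r : ℕ} {f : ℕ → α}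
    (h12 : 2 ≤ r → f 1 < f 2) (hchain : ∀ j, 2 ≤ j → j + 1 ≤ r → f j < f (j + 1)) :
    StrictMonoOn f (Set.Icc 1 r) := by
  refine strictMonoOn_of_lt_add_one Set.ordConnected_Icc fun j _ hj hj' ↦ ?_
  rcases hj.1.eq_or_lt with rfl | h2
  · exact h12 hj'.2
  · exact hchain j h2 hj'.2

theorem degree_of_adjoin_prime_roots_general (D : ℕ) (hD : 2 ≤ D) (r : ℕ) (hr : 1 ≤ r) (a : ℕ → ℕ)
    (ha : ∀ j, 1 ≤ j → j ≤ r → ∃ ℓ : ℕ, ℓ.Prime ∧ D.Coprime (padicValNat ℓ (a j)) ∧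
      ∀ i, 1 ≤ i → i < j → D ∣ padicValNat ℓ (a i))
    (F : ℕ → IntermediateField ℚ ℝ)
    (hF : ∀ j, F j = adjoin ℚ
      {x : ℝ | ∃ i : ℕ, 1 ≤ i ∧ i ≤ j ∧ x = (a i : ℝ) ^ ((1 : ℝ) / (D : ℝ))}) :
    Module.finrank ℚ (F 1) = D ∧
    ∀ j, 2 ≤ j → j ≤ r →
      ∃ h : F (j - 1) ≤ F j, Module.finrank (F (j - 1)) (extendScalars h) = D := by
  have ha0 (j : ℕ) (h1 : 1 ≤ j) (hj : j ≤ r) : a j ≠ 0 := by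
    obtain ⟨ℓ, -, hcop, -⟩ := ha j h1 hj
    rintro h0
    rw [h0, padicValNat_zero_right, Nat.coprime_zero_right] at hcop
    lia
  have himage (j : ℕ) :
      F j = adjoin ℚ ((fun n : ℕ ↦ (n : ℝ) ^ ((1 : ℝ) / (D : ℝ))) '' (a '' Set.Icc 1 j)) := by
    rw [hF, Set.image_image]
    congr 1
    ext x
    simp only [Set.mem_ofPred_eq, Set.mem_image, Set.mem_Icc, and_assoc, eq_comm]
  have hstep (j : ℕ) (hj : j + 1 ≤ r) : relfinrank (F j) (F (j + 1)) = D := by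
    obtain ⟨ℓ, hℓ, hcop, hdvd⟩ := ha (j + 1) (by lia) hj
    have := Fact.mk hℓ
    rw [himage, himage, ← Set.insert_Icc_right_eq_Icc_add_one (by lia), Set.image_insert_eq]
    refine relfinrank_adjoin_image_rpow_insert (ℓ := ℓ) (by lia)
      (Set.forall_mem_image.2 fun i hi ↦ ?_) (ha0 _ (by lia) hj) hcop
    exact ⟨ha0 i hi.1 (hi.2.trans (by lia)), hdvd i hi.1 (Nat.lt_succ_of_le hi.2)⟩
  constructor
  · have hF0 : F 0 = ⊥ := by simp [himage]
    rw [← relfinrank_bot_left, ← hF0, hstep 0 hr]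
  · intro j h2 hj
    have hle : F (j - 1) ≤ F j := by
      rw [himage, himage]
      gcongr
      lia
    refine ⟨hle, ?_⟩
    rw [← relfinrank_eq_finrank_of_le hle]
    obtain ⟨k, rfl⟩ := Nat.exists_eq_add_of_le' (one_le_two.trans h2)
    exact hstep k hj

theorem degree_of_adjoin_prime_roots (D : ℕ) (hD : 2 ≤ D)
    (r : ℕ) (hr : 1 ≤ r) (p : ℕ → ℕ)
    (hp : ∀ j : ℕ, 1 ≤ j → j ≤ r → (p j).Prime)
    (h12 : 2 ≤ r → p 1 + 1 < p 2)
    (hchain : ∀ j : ℕ, 2 ≤ j → j + 1 ≤ r → p j < p (j + 1))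
    (F : ℕ → IntermediateField ℚ ℝ)
    (hF : ∀ j : ℕ, F j = IntermediateField.adjoin ℚ
      {x : ℝ | ∃ i : ℕ, 1 ≤ i ∧ i ≤ j ∧ x = (p i : ℝ) ^ ((1 : ℝ) / (D : ℝ))}) :
    Module.finrank ℚ (F 1) = D ∧
    ∀ j : ℕ, 2 ≤ j → j ≤ r →
      ∃ h : F (j - 1) ≤ F j,
        Module.finrank (F (j - 1)) (IntermediateField.extendScalars h) = D := by
  have hlt (h : 2 ≤ r) : p 1 < p 2 := (Nat.lt_succ_self _).trans (h12 h)
  have hmono : StrictMonoOn p (Set.Icc 1 r) := strictMonoOn_Icc_one_of_lt_add_one hlt hchain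
  exact degree_of_adjoin_prime_roots_general D hD r hr p
    (exists_prime_coprime_padicValNat_of_injOn hp hmono.injOn) F hF
end
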